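/- Let b ≥ 0 be a constant and suppose u : ℝ^n → ℝ is a smooth convex function satisfying Δu + b·det(D²u) = 1 on all of ℝ^n. Then u is a quadratic polynomial; equivalently, the Hessian D²u is a constant matrix. -/

import Mathlib

/-- The Hessian matrix `D²u(x)` of `u : ℝⁿ → ℝ` at `x`, with entries `∂_i ∂_j u(x)`. -/
noncomputable def Hess (n : ℕ) (u : EuclideanSpace ℝ (Fin n) → ℝ)
    (x : EuclideanSpace ℝ (Fin n)) : Matrix (Fin n) (Fin n) ℝ :=
  Matrix.of fun i j =>
    iteratedFDeriv ℝ 2 u x ![EuclideanSpace.single i 1, EuclideanSpace.single j 1]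

section PartP1

open scoped ContDiff
open MeasureTheory

/-- partial derivative -/
noncomputable def pd {n : ℕ} (i : Fin n) (f : EuclideanSpace ℝ (Fin n) → ℝ) :
    EuclideanSpace ℝ (Fin n) → ℝ :=
  fun x => fderiv ℝ f x (EuclideanSpace.single i 1)

theorem contDiff_pd {n : ℕ} (i : Fin n) {f : EuclideanSpace ℝ (Fin n) → ℝ} (hf : ContDiff ℝ ∞ f) :
    ContDiff ℝ ∞ (pd i f) :=
  (hf.fderiv_right (m := ∞) (by simp)).clm_apply contDiff_const

theorem cd_diff {n : ℕ} {f : EuclideanSpace ℝ (Fin n) → ℝ} (hf : ContDiff ℝ ∞ f) :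
    Differentiable ℝ f := hf.differentiable (by simp)

theorem pd_add {n : ℕ} (i : Fin n) {f g : EuclideanSpace ℝ (Fin n) → ℝ} (hf : ContDiff ℝ ∞ f)
    (hg : ContDiff ℝ ∞ g) (x : EuclideanSpace ℝ (Fin n)) :
    pd i (fun y => f y + g y) x = pd i f x + pd i g x := by
  unfold pd
  rw [fderiv_fun_add (cd_diff hf x) (cd_diff hg x)]; rfl

theorem pd_neg {n : ℕ} (i : Fin n) {f : EuclideanSpace ℝ (Fin n) → ℝ}
    (x : EuclideanSpace ℝ (Fin n)) :
    pd i (fun y => - f y) x = - pd i f x := by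
  unfold pd
  rw [fderiv_fun_neg]; rfl

theorem pd_mul {n : ℕ} (i : Fin n) {f g : EuclideanSpace ℝ (Fin n) → ℝ} (hf : ContDiff ℝ ∞ f)
    (hg : ContDiff ℝ ∞ g) (x : EuclideanSpace ℝ (Fin n)) :
    pd i (fun y => f y * g y) x = pd i f x * g x + f x * pd i g x := by
  unfold pd
  rw [fderiv_fun_mul (cd_diff hf x) (cd_diff hg x)]
  simp; ring

theorem pd_sum {n : ℕ} {ι : Type*} (s : Finset ι) (i : Fin n)
    {f : ι → EuclideanSpace ℝ (Fin n) → ℝ} (hf : ∀ k, ContDiff ℝ ∞ (f k))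
    (x : EuclideanSpace ℝ (Fin n)) :
    pd i (fun y => ∑ k ∈ s, f k y) x = ∑ k ∈ s, pd i (f k) x := by
  unfold pd
  rw [fderiv_fun_sum (fun k _ => cd_diff (hf k) x)]
  simp

theorem pd_const {n : ℕ} (i : Fin n) (c : ℝ) (x : EuclideanSpace ℝ (Fin n)) :
    pd i (fun _ => c) x = 0 := by
  unfold pd; simp

theorem pd_comp {n : ℕ} (i : Fin n) {f : EuclideanSpace ℝ (Fin n) → ℝ} (hf : ContDiff ℝ ∞ f)
    {g : ℝ → ℝ} {g' : ℝ} (x : EuclideanSpace ℝ (Fin n)) (hg : HasDerivAt g g' (f x)) :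
    pd i (fun y => g (f y)) x = g' * pd i f x := by
  unfold pd
  have := (hg.comp_hasFDerivAt x (cd_diff hf x).hasFDerivAt).fderiv
  change (fderiv ℝ (g ∘ f) x) _ = _
  rw [this]; simp

theorem pd_comm {n : ℕ} (i j : Fin n) {f : EuclideanSpace ℝ (Fin n) → ℝ} (hf : ContDiff ℝ ∞ f)
    (x : EuclideanSpace ℝ (Fin n)) :
    pd i (pd j f) x = pd j (pd i f) x := by
  have h2 : IsSymmSndFDerivAt ℝ f x := (hf.contDiffAt).isSymmSndFDerivAt (by
    rw [minSmoothness_of_isRCLikeNormedField]; exact WithTop.coe_le_coe.2 (le_top : (2:ℕ∞) ≤ ⊤))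
  have hd : DifferentiableAt ℝ (fderiv ℝ f) x :=
    (hf.fderiv_right (m := ∞) (by simp)).differentiable (by simp) x
  unfold pd
  rw [fderiv_clm_apply hd (by fun_prop), fderiv_clm_apply hd (by fun_prop)]
  simpa using h2 _ _

theorem norm_fderiv_sq_le {n : ℕ} (f : EuclideanSpace ℝ (Fin n) → ℝ)
    (x : EuclideanSpace ℝ (Fin n)) : ‖fderiv ℝ f x‖ ^ 2 ≤ ∑ i, (pd i f x) ^ 2 := by
  have h : ‖fderiv ℝ f x‖ ≤ Real.sqrt (∑ i, (pd i f x) ^ 2) := by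
    refine ContinuousLinearMap.opNorm_le_bound _ (Real.sqrt_nonneg _) fun z => ?_
    have hz : z = ∑ i, z i • EuclideanSpace.single i (1:ℝ) := by
      ext j
      simp [Finset.sum_apply, Pi.single_apply]
    have : fderiv ℝ f x z = ∑ i, pd i f x * z i := by
      conv_lhs => rw [hz]
      rw [map_sum]
      exact Finset.sum_congr rfl fun i _ => by simp [pd, mul_comm]
    rw [this, Real.norm_eq_abs, EuclideanSpace.norm_eq, ← Real.sqrt_mul (by positivity)]
    apply Real.abs_le_sqrt
    simpa using Finset.sum_mul_sq_le_sq_mul_sq Finset.univ (fun i => pd i f x) (fun i => z i)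
  calc _ ≤ (Real.sqrt (∑ i, (pd i f x) ^ 2)) ^ 2 := by gcongr
    _ = _ := Real.sq_sqrt (by positivity)

theorem abs_pd_le {n : ℕ} (i : Fin n) (f : EuclideanSpace ℝ (Fin n) → ℝ)
    (x : EuclideanSpace ℝ (Fin n)) : |pd i f x| ≤ ‖fderiv ℝ f x‖ := by
  have := (fderiv ℝ f x).le_opNorm (EuclideanSpace.single i 1)
  simpa [pd] using this

/-- bilinear form of a coefficient matrix -/
noncomputable def Bf {n : ℕ} (A : Matrix (Fin n) (Fin n) ℝ) (p q : Fin n → ℝ) : ℝ :=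
  ∑ i, ∑ j, A i j * p i * q j

/-- gradient as a tuple -/
noncomputable def gr {n : ℕ} (f : EuclideanSpace ℝ (Fin n) → ℝ) (x : EuclideanSpace ℝ (Fin n)) :
    Fin n → ℝ := fun i => pd i f x

/-- the second order operator -/
noncomputable def Lop {n : ℕ} (a : EuclideanSpace ℝ (Fin n) → Matrix (Fin n) (Fin n) ℝ)
    (f : EuclideanSpace ℝ (Fin n) → ℝ) (x : EuclideanSpace ℝ (Fin n)) : ℝ :=
  ∑ i, ∑ j, a x i j * pd i (pd j f) x

/-- uniformly elliptic, divergence free coefficients -/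
structure Ell {n : ℕ} (Λ : ℝ) (a : EuclideanSpace ℝ (Fin n) → Matrix (Fin n) (Fin n) ℝ) :
    Prop where
  smooth : ∀ i j, ContDiff ℝ ∞ (fun x => a x i j)
  symm : ∀ x i j, a x i j = a x j i
  divfree : ∀ x j, ∑ i, pd i (fun y => a y i j) x = 0
  lower : ∀ x p, ∑ i, p i ^ 2 ≤ Bf (a x) p p
  upper : ∀ x p, Bf (a x) p p ≤ Λ * ∑ i, p i ^ 2

theorem integral_pd_eq_zero {n : ℕ} (i : Fin n) {f : EuclideanSpace ℝ (Fin n) → ℝ}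
    (hf : ContDiff ℝ ∞ f) (hc : HasCompactSupport f) : ∫ x, pd i f x = 0 := by
  have hI : Integrable f := hf.continuous.integrable_of_hasCompactSupport hc
  have hI' : Integrable (fun x => fderiv ℝ f x (EuclideanSpace.single i 1)) := by
    refine (contDiff_pd i hf).continuous.integrable_of_hasCompactSupport ?_
    exact (hc.fderiv (𝕜 := ℝ)).comp_left (g := fun L => L (EuclideanSpace.single i 1)) (by simp)
  have := integral_mul_fderiv_eq_neg_fderiv_mul_of_integrable (𝕜 := ℝ) (μ := volume) (f := fun _ => (1:ℝ)) (g := f)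
    (v := EuclideanSpace.single i 1) (by simp) (by simpa using hI') (by simpa using hI)
    (fun x _ => by fun_prop) (fun x _ => cd_diff hf x)
  simpa [pd] using this

theorem hcs_pd {n : ℕ} (i : Fin n) {f : EuclideanSpace ℝ (Fin n) → ℝ}
    (hc : HasCompactSupport f) : HasCompactSupport (pd i f) := by
  have h : HasCompactSupport ((fun L : EuclideanSpace ℝ (Fin n) →L[ℝ] ℝ =>
      L (EuclideanSpace.single i 1)) ∘ (fderiv ℝ f)) :=
    (hc.fderiv (𝕜 := ℝ)).comp_left (by simp)
  exact h

theorem ibp {n : ℕ} {Λ : ℝ} {a : EuclideanSpace ℝ (Fin n) → Matrix (Fin n) (Fin n) ℝ}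
    (ha : Ell Λ a) {f ζ : EuclideanSpace ℝ (Fin n) → ℝ} (hf : ContDiff ℝ ∞ f)
    (hζ : ContDiff ℝ ∞ ζ) (hc : HasCompactSupport ζ) :
    ∫ x, (ζ x * Lop a f x + Bf (a x) (gr ζ x) (gr f x)) = 0 := by
  have hs : ∀ i j, ContDiff ℝ ∞ (fun x => ζ x * (a x i j * pd j f x)) := fun i j =>
    hζ.mul ((ha.smooth i j).mul (contDiff_pd j hf))
  have hcs : ∀ i j, HasCompactSupport (fun x => ζ x * (a x i j * pd j f x)) := fun i j =>
    hc.mul_right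
  have key : ∀ x, ζ x * Lop a f x + Bf (a x) (gr ζ x) (gr f x) =
      ∑ i, ∑ j, pd i (fun y => ζ y * (a y i j * pd j f y)) x := by
    intro x
    have h1 : ∀ i j, pd i (fun y => ζ y * (a y i j * pd j f y)) x =
        (a x i j * pd i ζ x * pd j f x + ζ x * (a x i j * pd i (pd j f) x)) +
          ζ x * (pd i (fun y => a y i j) x * pd j f x) := by
      intro i j
      rw [pd_mul i hζ ((ha.smooth i j).mul (contDiff_pd j hf)),
        pd_mul i (ha.smooth i j) (contDiff_pd j hf)]
      ring
    simp_rw [h1, Finset.sum_add_distrib]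
    have h2 : ∑ i, ∑ j, ζ x * (pd i (fun y => a y i j) x * pd j f x) = 0 := by
      rw [Finset.sum_comm]
      refine Finset.sum_eq_zero fun j _ => ?_
      rw [← Finset.mul_sum, ← Finset.sum_mul, ha.divfree x j]; simp
    rw [h2]
    simp only [Lop, Bf, gr, Finset.mul_sum]
    ring
  simp_rw [key]
  rw [integral_finsetSum]
  · refine Finset.sum_eq_zero fun i _ => ?_
    rw [integral_finsetSum]
    · exact Finset.sum_eq_zero fun j _ => integral_pd_eq_zero i (hs i j) (hcs i j)
    · intro j _
      exact (contDiff_pd i (hs i j)).continuous.integrable_of_hasCompactSupport (hcs_pd i (hcs i j))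
  · intro i _
    refine integrable_finsetSum _ fun j _ => ?_
    exact (contDiff_pd i (hs i j)).continuous.integrable_of_hasCompactSupport (hcs_pd i (hcs i j))

end PartP1

section PartP2

open scoped ContDiff
open MeasureTheory

/-- closed ball described by the squared radius -/
def Bs (n : ℕ) (ρ : ℝ) : Set (EuclideanSpace ℝ (Fin n)) := {x | ‖x‖ ^ 2 ≤ ρ}

theorem isClosed_Bs (n : ℕ) (ρ : ℝ) : IsClosed (Bs n ρ) :=
  isClosed_le (by fun_prop) (by fun_prop)

theorem isCompact_Bs (n : ℕ) (ρ : ℝ) : IsCompact (Bs n ρ) := by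
  refine (isCompact_closedBall (0 : EuclideanSpace ℝ (Fin n)) (Real.sqrt ρ)).of_isClosed_subset
    (isClosed_Bs n ρ) ?_
  intro x hx
  rw [mem_closedBall_zero_iff]
  exact Real.le_sqrt_of_sq_le hx

theorem smoothTransition_deriv_bound :
    ∃ K : ℝ, 0 < K ∧ ∀ x, |deriv Real.smoothTransition x| ≤ K := by
  have hc : Continuous (deriv Real.smoothTransition) :=
    (Real.smoothTransition.contDiff (n := ⊤)).continuous_deriv (by simp)
  obtain ⟨K, hK⟩ := (isCompact_Icc (a := (0:ℝ)) (b := 1)).exists_bound_of_continuousOn hc.continuousOn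
  refine ⟨|K| + 1, by positivity, fun x => ?_⟩
  by_cases h0 : x < 0
  · have : Real.smoothTransition =ᶠ[nhds x] fun _ => 0 := by
      filter_upwards [Iio_mem_nhds h0] with y hy
      exact Real.smoothTransition.zero_of_nonpos hy.le
    rw [this.deriv_eq]; simp; positivity
  by_cases h1 : 1 < x
  · have : Real.smoothTransition =ᶠ[nhds x] fun _ => 1 := by
      filter_upwards [Ioi_mem_nhds h1] with y hy
      exact Real.smoothTransition.one_of_one_le hy.le
    rw [this.deriv_eq]; simp; positivity
  have := hK x ⟨not_lt.1 h0, not_lt.1 h1⟩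
  rw [Real.norm_eq_abs] at this
  linarith [le_abs_self K]

theorem pd_norm_sq {n : ℕ} (i : Fin n) (x : EuclideanSpace ℝ (Fin n)) :
    pd i (fun y => ‖y‖ ^ 2) x = 2 * x i := by
  unfold pd
  have := (hasStrictFDerivAt_norm_sq x).hasFDerivAt.fderiv
  rw [this]
  simp [EuclideanSpace.inner_single_right]

theorem cutoff (n : ℕ) : ∃ K : ℝ, 0 < K ∧ ∀ ρ' ρ : ℝ, ρ' < ρ → ρ ≤ 16 →
    ∃ φ : EuclideanSpace ℝ (Fin n) → ℝ, ContDiff ℝ ∞ φ ∧ HasCompactSupport φ ∧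
      (∀ x, 0 ≤ φ x) ∧ (∀ x, φ x ≤ 1) ∧ (∀ x ∈ Bs n ρ', φ x = 1) ∧ (∀ x ∉ Bs n ρ, φ x = 0) ∧
      (∀ x ∉ Bs n ρ, ∀ i, pd i φ x = 0) ∧
      (∀ x, ∑ i, (pd i φ x) ^ 2 ≤ (K / (ρ - ρ')) ^ 2) := by
  obtain ⟨K0, hK0, hK⟩ := smoothTransition_deriv_bound
  refine ⟨8 * K0, by positivity, fun ρ' ρ h1 h2 => ?_⟩
  have hd : 0 < ρ - ρ' := by linarith
  set s : EuclideanSpace ℝ (Fin n) → ℝ := fun x => (ρ - ‖x‖ ^ 2) / (ρ - ρ') with hs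
  have hss : ContDiff ℝ ∞ s := (contDiff_const.sub (contDiff_norm_sq ℝ)).div_const _
  set φ : EuclideanSpace ℝ (Fin n) → ℝ := fun x => Real.smoothTransition (s x) with hφ
  have hφs : ContDiff ℝ ∞ φ := (Real.smoothTransition.contDiff (n := ⊤)).comp hss
  have hz : ∀ x ∉ Bs n ρ, φ x = 0 := by
    intro x hx
    have hx' : ρ < ‖x‖ ^ 2 := not_le.1 hx
    exact Real.smoothTransition.zero_of_nonpos (div_nonpos_of_nonpos_of_nonneg (by linarith) hd.le)
  have hz' : ∀ x ∉ Bs n ρ, ∀ i, pd i φ x = 0 := by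
    intro x hx i
    have : φ =ᶠ[nhds x] fun _ => 0 := by
      filter_upwards [(isClosed_Bs n ρ).isOpen_compl.mem_nhds hx] with y hy
      exact hz y hy
    unfold pd
    rw [this.fderiv_eq]; simp
  refine ⟨φ, hφs, HasCompactSupport.intro (isCompact_Bs n ρ) hz, fun x => Real.smoothTransition.nonneg _, fun x => Real.smoothTransition.le_one _, ?_, hz, hz', ?_⟩
  · intro x hx
    have hx' : ‖x‖ ^ 2 ≤ ρ' := hx
    apply Real.smoothTransition.one_of_one_le
    rw [hs]
    exact (one_le_div hd).2 (by linarith)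
  · intro x
    by_cases hx : x ∈ Bs n ρ
    · have hp : ∀ i, pd i φ x = deriv Real.smoothTransition (s x) * (-2 * x i / (ρ - ρ')) := by
        intro i
        rw [hφ, pd_comp i hss (g := Real.smoothTransition) (g' := deriv Real.smoothTransition (s x))]
        · congr 1
          have : s = fun x => (ρ - ‖x‖ ^ 2) * (ρ - ρ')⁻¹ := by ext; rw [hs]; rfl
          rw [this, pd_mul i (contDiff_const.sub (contDiff_norm_sq ℝ)) contDiff_const, pd_const]
          have h3 : pd i (fun y : EuclideanSpace ℝ (Fin n) => ρ - ‖y‖ ^ 2) x = - (2 * x i) := by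
            simp_rw [sub_eq_add_neg]
            rw [pd_add i contDiff_const (contDiff_norm_sq ℝ).neg, pd_const, pd_neg, pd_norm_sq]; simp
          rw [h3]; ring
        · exact ((Real.smoothTransition.contDiff (n := ⊤)).differentiable (by simp) _).hasDerivAt
      have hx' : ‖x‖ ^ 2 ≤ ρ := hx
      have e1 : ∑ i, (pd i φ x) ^ 2 = (deriv Real.smoothTransition (s x)) ^ 2 * (4 * ‖x‖ ^ 2) / (ρ - ρ') ^ 2 := by
        rw [EuclideanSpace.real_norm_sq_eq]
        simp_rw [hp, Finset.mul_sum, Finset.sum_div]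
        refine Finset.sum_congr rfl fun i _ => ?_
        have hne := hd.ne'
        field_simp
        norm_num
        ring
      rw [e1, div_pow]
      gcongr
      have := sq_le_sq' (abs_le.1 (hK (s x))).1 (abs_le.1 (hK (s x))).2
      have h4 : 0 ≤ ‖x‖ ^ 2 := by positivity
      nlinarith
    · simp [hz' x hx]; positivity

theorem Bf_sq {n : ℕ} {A : Matrix (Fin n) (Fin n) ℝ} (hA : ∀ i j, A i j = A j i)
    (p q : Fin n → ℝ) (s t : ℝ) :
    Bf A (fun i => s * p i + t * q i) (fun i => s * p i + t * q i) =
      s ^ 2 * Bf A p p + 2 * s * t * Bf A p q + t ^ 2 * Bf A q q := by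
  have hsym : Bf A q p = Bf A p q := by
    unfold Bf
    rw [Finset.sum_comm]
    refine Finset.sum_congr rfl fun i _ => Finset.sum_congr rfl fun j _ => ?_
    rw [hA j i]; ring
  have : Bf A (fun i => s * p i + t * q i) (fun i => s * p i + t * q i) =
      s ^ 2 * Bf A p p + s * t * Bf A p q + s * t * Bf A q p + t ^ 2 * Bf A q q := by
    simp only [Bf, Finset.mul_sum, ← Finset.sum_add_distrib]
    refine Finset.sum_congr rfl fun i _ => Finset.sum_congr rfl fun j _ => ?_
    ring
  rw [this, hsym]; ring

theorem Bf_cs {n : ℕ} {Λ : ℝ} {a : EuclideanSpace ℝ (Fin n) → Matrix (Fin n) (Fin n) ℝ}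
    (ha : Ell Λ a) (x : EuclideanSpace ℝ (Fin n)) (p q : Fin n → ℝ) (s t : ℝ) :
    -(1/2) * s ^ 2 * Bf (a x) p p - 2 * t ^ 2 * Bf (a x) q q ≤ 2 * s * t * Bf (a x) p q := by
  have h := ha.lower x (fun i => s * p i + (2 * t) * q i)
  rw [Bf_sq (ha.symm x)] at h
  have h0 : 0 ≤ ∑ i, (s * p i + (2 * t) * q i) ^ 2 := Finset.sum_nonneg fun i _ => sq_nonneg _
  linarith

theorem Bf_lin {n : ℕ} (A : Matrix (Fin n) (Fin n) ℝ) (p q r : Fin n → ℝ) (s t : ℝ) :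
    Bf A (fun i => s * p i + t * q i) r = s * Bf A p r + t * Bf A q r := by
  simp only [Bf, Finset.mul_sum, ← Finset.sum_add_distrib]
  refine Finset.sum_congr rfl fun i _ => Finset.sum_congr rfl fun j _ => ?_
  ring

theorem Bf_comm {n : ℕ} {A : Matrix (Fin n) (Fin n) ℝ} (hA : ∀ i j, A i j = A j i)
    (p q : Fin n → ℝ) : Bf A q p = Bf A p q := by
  unfold Bf
  rw [Finset.sum_comm]
  refine Finset.sum_congr rfl fun i _ => Finset.sum_congr rfl fun j _ => ?_
  rw [hA j i]; ring

theorem gsq_int {n : ℕ} {f φ : EuclideanSpace ℝ (Fin n) → ℝ} (hf : Continuous f)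
    (hφ : ContDiff ℝ ∞ φ) (hc : HasCompactSupport φ) :
    Integrable (fun x => f x * ∑ i, (pd i φ x) ^ 2) := by
  refine Continuous.integrable_of_hasCompactSupport ?_ ?_
  · exact hf.mul (continuous_finsetSum _ fun i _ => (contDiff_pd i hφ).continuous.pow 2)
  · have hc' : HasCompactSupport (fun x => ∑ i, (pd i φ x) ^ 2) := by
      refine HasCompactSupport.intro (hc.fderiv (𝕜 := ℝ)) fun x hx => ?_
      have : fderiv ℝ φ x = 0 := image_eq_zero_of_notMem_tsupport hx
      simp [pd, this]
    exact hc'.mul_left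

/-- Caccioppoli -/
theorem caccioppoli {n : ℕ} {Λ : ℝ} {a : EuclideanSpace ℝ (Fin n) → Matrix (Fin n) (Fin n) ℝ}
    (ha : Ell Λ a) {f φ : EuclideanSpace ℝ (Fin n) → ℝ} (hf : ContDiff ℝ ∞ f)
    (hf0 : ∀ x, 0 ≤ f x) (hL : ∀ x, 0 ≤ Lop a f x)
    (hφ : ContDiff ℝ ∞ φ) (hc : HasCompactSupport φ) :
    ∫ x, φ x ^ 2 * ∑ i, (pd i f x) ^ 2 ≤ 4 * Λ * ∫ x, f x ^ 2 * ∑ i, (pd i φ x) ^ 2 := by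
  have hζ : ContDiff ℝ ∞ (fun x => φ x ^ 2 * f x) := (hφ.pow 2).mul hf
  have hφ2 : HasCompactSupport (fun x => φ x ^ 2) := hc.comp_left (g := fun t => t ^ 2) (by simp)
  have hζc : HasCompactSupport (fun x => φ x ^ 2 * f x) := hφ2.mul_right
  have h0 := ibp ha hf hζ hζc
  have i1 : Integrable (fun x => φ x ^ 2 * ∑ i, (pd i f x) ^ 2) := by
    refine Continuous.integrable_of_hasCompactSupport ?_ hφ2.mul_right
    exact (hφ.continuous.pow 2).mul
      (continuous_finsetSum _ fun i _ => (contDiff_pd i hf).continuous.pow 2)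
  have i2 : Integrable (fun x => f x ^ 2 * ∑ i, (pd i φ x) ^ 2) := gsq_int (hf.continuous.pow 2) hφ hc
  have hgr : ∀ x, gr (fun x => φ x ^ 2 * f x) x =
      fun i => (2 * φ x * f x) * gr φ x i + φ x ^ 2 * gr f x i := by
    intro x; ext i
    simp only [gr]
    rw [pd_mul i (hφ.pow 2) hf, pd_comp i hφ (g := fun t => t ^ 2) x (hasDerivAt_pow 2 _)]
    simp; ring
  have hpt : ∀ x, (1/2) * (φ x ^ 2 * ∑ i, (pd i f x) ^ 2) - 2 * Λ * (f x ^ 2 * ∑ i, (pd i φ x) ^ 2) ≤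
      (φ x ^ 2 * f x) * Lop a f x + Bf (a x) (gr (fun x => φ x ^ 2 * f x) x) (gr f x) := by
    intro x
    rw [hgr x, Bf_lin]
    have h1 := Bf_cs ha x (gr f x) (gr φ x) (φ x) (f x)
    rw [Bf_comm (ha.symm x) (gr φ x) (gr f x)] at h1
    have h2 : 0 ≤ (φ x ^ 2 * f x) * Lop a f x := mul_nonneg (mul_nonneg (sq_nonneg _) (hf0 x)) (hL x)
    have h3 := ha.lower x (gr f x)
    have h4 := ha.upper x (gr φ x)
    have h5 : φ x ^ 2 * ∑ i, gr f x i ^ 2 ≤ φ x ^ 2 * Bf (a x) (gr f x) (gr f x) :=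
      mul_le_mul_of_nonneg_left h3 (sq_nonneg _)
    have h6 : f x ^ 2 * Bf (a x) (gr φ x) (gr φ x) ≤ f x ^ 2 * (Λ * ∑ i, gr φ x i ^ 2) :=
      mul_le_mul_of_nonneg_left h4 (sq_nonneg _)
    simp only [gr] at *
    linarith
  have i3 : Integrable (fun x => (φ x ^ 2 * f x) * Lop a f x + Bf (a x) (gr (fun x => φ x ^ 2 * f x) x) (gr f x)) := by
    refine Continuous.integrable_of_hasCompactSupport ?_ ?_
    · refine Continuous.add (hζ.continuous.mul ?_) ?_
      · exact continuous_finsetSum _ fun i _ => continuous_finsetSum _ fun j _ =>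
          (ha.smooth i j).continuous.mul (contDiff_pd i (contDiff_pd j hf)).continuous
      · exact continuous_finsetSum _ fun i _ => continuous_finsetSum _ fun j _ =>
          ((ha.smooth i j).continuous.mul (contDiff_pd i hζ).continuous).mul
            (contDiff_pd j hf).continuous
    · refine HasCompactSupport.intro hc fun x hx => ?_
      have : φ x = 0 := image_eq_zero_of_notMem_tsupport hx
      rw [hgr x]
      simp [this, Bf]
  have := integral_mono ((i1.const_mul (1/2)).sub (i2.const_mul (2 * Λ))) i3 hpt
  rw [h0] at this
  simp only [Pi.sub_apply] at this
  rw [integral_sub (i1.const_mul (1/2)) (i2.const_mul (2 * Λ)), integral_const_mul, integral_const_mul] at this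
  linarith

/-- logarithmic energy estimate -/
theorem log_energy {n : ℕ} {Λ : ℝ} {a : EuclideanSpace ℝ (Fin n) → Matrix (Fin n) (Fin n) ℝ}
    (ha : Ell Λ a) {f φ : EuclideanSpace ℝ (Fin n) → ℝ} (hf : ContDiff ℝ ∞ f)
    (hL : ∀ x, Bf (a x) (gr f x) (gr f x) ≤ Lop a f x)
    (hφ : ContDiff ℝ ∞ φ) (hc : HasCompactSupport φ) :
    ∫ x, φ x ^ 2 * ∑ i, (pd i f x) ^ 2 ≤ 4 * Λ * ∫ x, ∑ i, (pd i φ x) ^ 2 := by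
  have hζ : ContDiff ℝ ∞ (fun x => φ x ^ 2) := (hφ.pow 2)
  have hφ2 : HasCompactSupport (fun x => φ x ^ 2) := hc.comp_left (g := fun t => t ^ 2) (by simp)
  have h0 := ibp ha hf hζ hφ2
  have i1 : Integrable (fun x => φ x ^ 2 * ∑ i, (pd i f x) ^ 2) := by
    refine Continuous.integrable_of_hasCompactSupport ?_ hφ2.mul_right
    exact (hφ.continuous.pow 2).mul
      (continuous_finsetSum _ fun i _ => (contDiff_pd i hf).continuous.pow 2)
  have i2 : Integrable (fun x => ∑ i, (pd i φ x) ^ 2) := by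
    simpa using gsq_int (f := fun _ => 1) continuous_const hφ hc
  have hgr : ∀ x, gr (fun x => φ x ^ 2) x =
      fun i => (2 * φ x) * gr φ x i + 0 * gr f x i := by
    intro x; ext i
    simp only [gr]
    rw [pd_comp i hφ (g := fun t => t ^ 2) x (hasDerivAt_pow 2 _)]
    simp
  have hpt : ∀ x, (1/2) * (φ x ^ 2 * ∑ i, (pd i f x) ^ 2) - 2 * Λ * (∑ i, (pd i φ x) ^ 2) ≤
      (φ x ^ 2) * Lop a f x + Bf (a x) (gr (fun x => φ x ^ 2) x) (gr f x) := by
    intro x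
    rw [hgr x, Bf_lin]
    have h1 := Bf_cs ha x (gr f x) (gr φ x) (φ x) 1
    rw [Bf_comm (ha.symm x) (gr φ x) (gr f x)] at h1
    have h2 : φ x ^ 2 * Bf (a x) (gr f x) (gr f x) ≤ φ x ^ 2 * Lop a f x :=
      mul_le_mul_of_nonneg_left (hL x) (sq_nonneg _)
    have h3 := ha.lower x (gr f x)
    have h4 := ha.upper x (gr φ x)
    have h5 : φ x ^ 2 * ∑ i, gr f x i ^ 2 ≤ φ x ^ 2 * Bf (a x) (gr f x) (gr f x) :=
      mul_le_mul_of_nonneg_left h3 (sq_nonneg _)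
    simp only [gr] at *
    linarith
  have i3 : Integrable (fun x => (φ x ^ 2) * Lop a f x + Bf (a x) (gr (fun x => φ x ^ 2) x) (gr f x)) := by
    refine Continuous.integrable_of_hasCompactSupport ?_ ?_
    · refine Continuous.add (hζ.continuous.mul ?_) ?_
      · exact continuous_finsetSum _ fun i _ => continuous_finsetSum _ fun j _ =>
          (ha.smooth i j).continuous.mul (contDiff_pd i (contDiff_pd j hf)).continuous
      · exact continuous_finsetSum _ fun i _ => continuous_finsetSum _ fun j _ =>
          ((ha.smooth i j).continuous.mul (contDiff_pd i hζ).continuous).mul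
            (contDiff_pd j hf).continuous
    · refine HasCompactSupport.intro hc fun x hx => ?_
      have : φ x = 0 := image_eq_zero_of_notMem_tsupport hx
      rw [hgr x]
      simp [this, Bf]
  have := integral_mono ((i1.const_mul (1/2)).sub (i2.const_mul (2 * Λ))) i3 hpt
  rw [h0] at this
  simp only [Pi.sub_apply] at this
  rw [integral_sub (i1.const_mul (1/2)) (i2.const_mul (2 * Λ)), integral_const_mul, integral_const_mul] at this
  linarith

end PartP2

section PartP3

open scoped ContDiff
open MeasureTheory

theorem sobolev_real (n : ℕ) (χ : ℝ) (hχ : Real.HolderConjugate n χ) :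
    ∃ C : ℝ, 0 < C ∧ ∀ u : EuclideanSpace ℝ (Fin n) → ℝ, ContDiff ℝ ∞ u → HasCompactSupport u →
      (∀ x, 0 ≤ u x) → ∀ B : ℝ, ∫ x, ‖fderiv ℝ u x‖ ≤ B → ∫ x, u x ^ χ ≤ (C * B) ^ χ := by
  have hχ0 : 0 < χ := hχ.symm.pos
  set C0 := lintegralPowLePowLIntegralFDerivConst (volume : Measure (EuclideanSpace ℝ (Fin n))) χ
  refine ⟨((C0 : ℝ) + 1) ^ (1 / χ), by positivity, fun u hu hc h0 B hB => ?_⟩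
  have hB0 : 0 ≤ B := le_trans (integral_nonneg fun x => norm_nonneg _) hB
  have hfin : (Module.finrank ℝ (EuclideanSpace ℝ (Fin n)) : ℝ) = n := by simp
  have h := lintegral_pow_le_pow_lintegral_fderiv (volume : Measure (EuclideanSpace ℝ (Fin n)))
    (hu.of_le (by exact_mod_cast le_top)) hc (p := χ) (by rw [hfin]; exact hχ)
  have hI : Integrable (fun x => ‖fderiv ℝ u x‖) := by
    refine Continuous.integrable_of_hasCompactSupport ?_ (hc.fderiv (𝕜 := ℝ)).norm
    exact (hu.continuous_fderiv (by simp)).norm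
  have e1 : ∫⁻ x, ‖fderiv ℝ u x‖ₑ = ENNReal.ofReal (∫ x, ‖fderiv ℝ u x‖) := by
    rw [ofReal_integral_eq_lintegral_ofReal hI (Filter.Eventually.of_forall fun x => norm_nonneg _)]
    simp
  have e2 : ∫⁻ x, ‖u x‖ₑ ^ χ = ∫⁻ x, ENNReal.ofReal (u x ^ χ) := by
    congr 1; ext x
    rw [← ofReal_norm, ENNReal.ofReal_rpow_of_nonneg (norm_nonneg _) hχ0.le,
      Real.norm_of_nonneg (h0 x)]
  rw [e1, e2] at h
  have hI2 : Integrable (fun x => u x ^ χ) := by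
    refine Continuous.integrable_of_hasCompactSupport ?_ ?_
    · exact hu.continuous.rpow_const fun x => Or.inr hχ0.le
    · exact hc.comp_left (g := fun t => t ^ χ) (Real.zero_rpow hχ0.ne')
  rw [← ofReal_integral_eq_lintegral_ofReal hI2
    (Filter.Eventually.of_forall fun x => Real.rpow_nonneg (h0 x) _),
    ENNReal.ofReal_rpow_of_nonneg (integral_nonneg fun x => norm_nonneg _) hχ0.le] at h
  have h2 : ENNReal.ofReal (∫ x, u x ^ χ) ≤ ENNReal.ofReal (C0 * (∫ x, ‖fderiv ℝ u x‖) ^ χ) := by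
    rw [ENNReal.ofReal_mul (by positivity)]
    simpa using h
  rw [ENNReal.ofReal_le_ofReal_iff (mul_nonneg (by positivity) (Real.rpow_nonneg (integral_nonneg fun x => norm_nonneg _) _))] at h2
  refine h2.trans ?_
  rw [Real.mul_rpow (by positivity) hB0, ← Real.rpow_mul (by positivity), one_div,
    inv_mul_cancel₀ hχ0.ne', Real.rpow_one]
  have h3 : (∫ x, ‖fderiv ℝ u x‖) ^ χ ≤ B ^ χ :=
    Real.rpow_le_rpow (integral_nonneg fun x => norm_nonneg _) hB hχ0.le
  have h4 : 0 ≤ B ^ χ := by positivity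
  have h5 : (0:ℝ) ≤ C0 := by positivity
  nlinarith

theorem intOn_Bs {n : ℕ} (ρ : ℝ) {f : EuclideanSpace ℝ (Fin n) → ℝ} (hf : Continuous f) :
    IntegrableOn f (Bs n ρ) :=
  hf.continuousOn.integrableOn_compact (isCompact_Bs n ρ)

/-- Moser step -/
theorem moser_step (n : ℕ) (Λ : ℝ) (χ : ℝ) (hχ : Real.HolderConjugate n χ) (hΛ : 0 ≤ Λ) :
    ∃ C : ℝ, 0 < C ∧ ∀ a, Ell (n := n) Λ a → ∀ f : EuclideanSpace ℝ (Fin n) → ℝ, ContDiff ℝ ∞ f →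
      (∀ x, 0 ≤ f x) → (∀ x, 0 ≤ Lop a f x) → ∀ ρ' ρ : ℝ, ρ' < ρ → ρ ≤ 16 →
      ∫ x in Bs n ρ', (f x ^ 2) ^ χ ≤ (C / (ρ - ρ') * ∫ x in Bs n ρ, f x ^ 2) ^ χ := by
  have hχ0 : 0 < χ := hχ.symm.pos
  obtain ⟨C, hC, hS⟩ := sobolev_real n χ hχ
  obtain ⟨K, hK, hcut⟩ := cutoff n
  refine ⟨C * (1 + (8 * Λ + 2) * K ^ 2), by positivity, ?_⟩
  intro a ha f hf hf0 hL ρ' ρ h1 h2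
  obtain ⟨φ, hφ, hc, hφ0, hφ1, hφe, hφz, hφz', hφb⟩ := hcut ρ' ρ h1 h2
  set d := ρ - ρ' with hd
  have hdp : 0 < d := by simp [hd]; linarith
  set I := ∫ x in Bs n ρ, f x ^ 2 with hI
  have hI0 : 0 ≤ I := integral_nonneg fun x => sq_nonneg _
  have hg : ContDiff ℝ ∞ (fun x => φ x * f x) := hφ.mul hf
  have hgc : HasCompactSupport (fun x => φ x * f x) := hc.mul_right
  have hu : ContDiff ℝ ∞ (fun x => (φ x * f x) ^ 2) := hg.pow 2
  have huc : HasCompactSupport (fun x => (φ x * f x) ^ 2) :=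
    hgc.comp_left (g := fun t => t ^ 2) (by simp)
  have hφ2 : HasCompactSupport (fun x => φ x ^ 2) := hc.comp_left (g := fun t => t ^ 2) (by simp)
  have hcac := caccioppoli ha hf hf0 hL hφ hc
  have i1 : Integrable (fun x => φ x ^ 2 * ∑ i, (pd i f x) ^ 2) := by
    refine Continuous.integrable_of_hasCompactSupport ?_ hφ2.mul_right
    exact (hφ.continuous.pow 2).mul
      (continuous_finsetSum _ fun i _ => (contDiff_pd i hf).continuous.pow 2)
  have i2 : Integrable (fun x => f x ^ 2 * ∑ i, (pd i φ x) ^ 2) := gsq_int (hf.continuous.pow 2) hφ hc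
  have i3 : Integrable (fun x => (φ x * f x) ^ 2) :=
    hu.continuous.integrable_of_hasCompactSupport huc
  have hmeas : MeasurableSet (Bs n ρ) := (isClosed_Bs n ρ).measurableSet
  have b2 : ∫ x, f x ^ 2 * ∑ i, (pd i φ x) ^ 2 ≤ (K / d) ^ 2 * I := by
    have : ∫ x, f x ^ 2 * ∑ i, (pd i φ x) ^ 2 = ∫ x in Bs n ρ, f x ^ 2 * ∑ i, (pd i φ x) ^ 2 := by
      rw [setIntegral_eq_integral_of_forall_compl_eq_zero]
      intro x hx; simp [hφz' x hx]
    rw [this, hI, ← integral_const_mul]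
    refine setIntegral_mono_on i2.integrableOn ((intOn_Bs ρ (hf.continuous.pow 2)).const_mul _) hmeas fun x _ => ?_
    rw [mul_comm]
    exact mul_le_mul_of_nonneg_right (hφb x) (sq_nonneg _)
  have b3 : ∫ x, (φ x * f x) ^ 2 ≤ I := by
    have : ∫ x, (φ x * f x) ^ 2 = ∫ x in Bs n ρ, (φ x * f x) ^ 2 := by
      rw [setIntegral_eq_integral_of_forall_compl_eq_zero]
      intro x hx; simp [hφz x hx]
    rw [this, hI]
    refine setIntegral_mono_on i3.integrableOn (intOn_Bs ρ (hf.continuous.pow 2)) hmeas fun x _ => ?_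
    rw [mul_pow]
    have : φ x ^ 2 ≤ 1 := pow_le_one₀ (hφ0 x) (hφ1 x)
    nlinarith [sq_nonneg (f x)]
  have hpt : ∀ x, ‖fderiv ℝ (fun x => (φ x * f x) ^ 2) x‖ ≤
      d⁻¹ * (φ x * f x) ^ 2 + d * (2 * (φ x ^ 2 * ∑ i, (pd i f x) ^ 2) + 2 * (f x ^ 2 * ∑ i, (pd i φ x) ^ 2)) := by
    intro x
    set S := 2 * (φ x ^ 2 * ∑ i, (pd i f x) ^ 2) + 2 * (f x ^ 2 * ∑ i, (pd i φ x) ^ 2) with hSd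
    have hS0 : 0 ≤ S := by
      have := Finset.sum_nonneg (s := Finset.univ) fun i _ => sq_nonneg (pd i f x)
      have := Finset.sum_nonneg (s := Finset.univ) fun i _ => sq_nonneg (pd i φ x)
      positivity
    set g := φ x * f x with hgdef
    have h1 := norm_fderiv_sq_le (fun x => (φ x * f x) ^ 2) x
    have h2 : ∑ i, (pd i (fun x => (φ x * f x) ^ 2) x) ^ 2 ≤ 4 * g ^ 2 * S := by
      rw [hSd, Finset.mul_sum, Finset.mul_sum, Finset.mul_sum, Finset.mul_sum, ← Finset.sum_add_distrib, Finset.mul_sum]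
      refine Finset.sum_le_sum fun i _ => ?_
      rw [pd_comp i hg (g := fun t => t ^ 2) x (hasDerivAt_pow 2 _), pd_mul i hφ hf]
      simp only [← hgdef]
      have : (pd i φ x * f x + φ x * pd i f x) ^ 2 ≤ 2 * (φ x ^ 2 * pd i f x ^ 2) + 2 * (f x ^ 2 * pd i φ x ^ 2) := by
        nlinarith [sq_nonneg (pd i φ x * f x - φ x * pd i f x)]
      have h4 : 0 ≤ 4 * g ^ 2 := by positivity
      have := mul_le_mul_of_nonneg_left this h4
      norm_num
      nlinarith
    refine abs_le_of_sq_le_sq' ?_ (by positivity) |>.2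
    have h3 : d⁻¹ * d = 1 := inv_mul_cancel₀ hdp.ne'
    have : 4 * g ^ 2 * S = 4 * (d⁻¹ * g ^ 2) * (d * S) := by linear_combination (- 4 * g ^ 2 * S) * h3
    nlinarith [sq_nonneg (d⁻¹ * g ^ 2 - d * S)]
  have b4 : ∫ x, ‖fderiv ℝ (fun x => (φ x * f x) ^ 2) x‖ ≤ (1 + (8 * Λ + 2) * K ^ 2) / d * I := by
    have j1 : Integrable (fun x => ‖fderiv ℝ (fun x => (φ x * f x) ^ 2) x‖) := by
      refine Continuous.integrable_of_hasCompactSupport ?_ (huc.fderiv (𝕜 := ℝ)).norm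
      exact (hu.continuous_fderiv (by simp)).norm
    have j2 : Integrable (fun x => 2 * (φ x ^ 2 * ∑ i, (pd i f x) ^ 2) + 2 * (f x ^ 2 * ∑ i, (pd i φ x) ^ 2)) :=
      (i1.const_mul 2).add (i2.const_mul 2)
    have := integral_mono j1 ((i3.const_mul d⁻¹).add (j2.const_mul d)) hpt
    refine this.trans ?_
    simp only [Pi.add_apply]
    rw [integral_add (i3.const_mul d⁻¹) (j2.const_mul d), integral_const_mul, integral_const_mul]
    rw [integral_add (i1.const_mul 2) (i2.const_mul 2), integral_const_mul, integral_const_mul]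
    have h5 : ∫ x, φ x ^ 2 * ∑ i, (pd i f x) ^ 2 ≤ 4 * Λ * ((K / d) ^ 2 * I) :=
      hcac.trans (mul_le_mul_of_nonneg_left b2 (by positivity))
    calc _ ≤ d⁻¹ * I + d * (2 * (4 * Λ * ((K / d) ^ 2 * I)) + 2 * ((K / d) ^ 2 * I)) := by
          gcongr
      _ = _ := by field_simp; ring
  have := hS _ hu huc (fun x => sq_nonneg _) _ b4
  have e : C * ((1 + (8 * Λ + 2) * K ^ 2) / d * I) = C * (1 + (8 * Λ + 2) * K ^ 2) / d * I := by ring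
  rw [e] at this
  refine le_trans ?_ this
  have k1 : Integrable (fun x => ((φ x * f x) ^ 2) ^ χ) := by
    refine Continuous.integrable_of_hasCompactSupport ?_ ?_
    · exact hu.continuous.rpow_const fun x => Or.inr hχ0.le
    · exact huc.comp_left (g := fun t => t ^ χ) (Real.zero_rpow hχ0.ne')
  calc ∫ x in Bs n ρ', (f x ^ 2) ^ χ = ∫ x in Bs n ρ', ((φ x * f x) ^ 2) ^ χ := by
        refine setIntegral_congr_fun (isClosed_Bs n ρ').measurableSet fun x hx => ?_
        simp [hφe x hx]
    _ ≤ _ := setIntegral_le_integral k1 (Filter.Eventually.of_forall fun x => by positivity)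

end PartP3

section PartP3b

open scoped ContDiff
open MeasureTheory

theorem Lop_comp {n : ℕ} {Λ : ℝ} {a : EuclideanSpace ℝ (Fin n) → Matrix (Fin n) (Fin n) ℝ}
    (ha : Ell Λ a) {H : EuclideanSpace ℝ (Fin n) → ℝ} (hH : ContDiff ℝ ∞ H) {g g1 g2 : ℝ → ℝ}
    (h1 : ∀ x, HasDerivAt g (g1 (H x)) (H x)) (h2 : ∀ x, HasDerivAt g1 (g2 (H x)) (H x))
    (hs : ContDiff ℝ ∞ (fun x => g1 (H x))) (x : EuclideanSpace ℝ (Fin n)) :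
    Lop a (fun y => g (H y)) x = g1 (H x) * Lop a H x + g2 (H x) * Bf (a x) (gr H x) (gr H x) := by
  have e : ∀ j, pd j (fun y => g (H y)) = fun y => g1 (H y) * pd j H y := fun j => by
    ext y; exact pd_comp j hH y (h1 y)
  simp only [Lop, Bf, gr, Finset.mul_sum, ← Finset.sum_add_distrib]
  refine Finset.sum_congr rfl fun i _ => Finset.sum_congr rfl fun j _ => ?_
  rw [e j, pd_mul i hs (contDiff_pd j hH), pd_comp i hH x (h2 x)]
  ring

theorem iter_num (n m : ℕ) (hm : 1 ≤ m) (hn : n = m + 1) (A : ℝ) (hA : 0 < A) (χ : ℝ)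
    (hχ : χ = (n:ℝ) / m) (X : ℕ → ℝ) (hX : ∀ j, 0 ≤ X j)
    (h : ∀ j, X (j+1) ≤ (A * 2 ^ j * X j) ^ χ) (j : ℕ) :
    (((2:ℝ)^n)^m * A^n) * ((2:ℝ)^n)^j * X j ≤ ((((2:ℝ)^n)^m * A^n) * X 0) ^ (χ^j) := by
  set L : ℝ := 2 ^ n with hL
  have hL0 : 0 < L := by positivity
  set K : ℝ := L ^ m * A ^ n with hK
  have hK0 : 0 < K := by positivity
  have hm0 : (m:ℝ) ≠ 0 := by positivity
  have hχ0 : 0 < χ := by rw [hχ]; subst hn; positivity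
  induction j with
  | zero => simp
  | succ j ih =>
    set Y := K * L ^ j * X j with hY
    have hY0 : 0 ≤ Y := mul_nonneg (by positivity) (hX j)
    have hstep : K * L ^ (j+1) * X (j+1) ≤ Y ^ χ := by
      have hpow : ∀ t : ℝ, 0 ≤ t → (t ^ χ) ^ m = t ^ n := by
        intro t ht
        rw [← Real.rpow_natCast, ← Real.rpow_mul ht, hχ, div_mul_cancel₀ _ hm0, Real.rpow_natCast]
      have hz : 0 ≤ A * 2 ^ j * X j := mul_nonneg (by positivity) (hX j)
      have h1 : X (j+1) ^ m ≤ (A * 2 ^ j * X j) ^ n := by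
        rw [← hpow _ hz]
        exact pow_le_pow_left₀ (hX _) (h j) m
      refine le_of_pow_le_pow_left₀ (n := m) (by omega) (by positivity) ?_
      rw [hpow _ hY0, mul_pow]
      calc (K * L ^ (j+1)) ^ m * X (j+1) ^ m ≤ (K * L ^ (j+1)) ^ m * (A * 2 ^ j * X j) ^ n := by
            gcongr
        _ = Y ^ n := by
            rw [hY, mul_pow K _ m, mul_pow (A * 2 ^ j) (X j) n, mul_pow A (2 ^ j) n, mul_pow (K * L ^ j) (X j) n, mul_pow K (L^j) n]
            have e1 : ((2:ℝ)^j)^n = L ^ j := by rw [hL]; ring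
            have e2 : L ^ m * A ^ n = K := rfl
            have e3 : (L ^ (j+1))^m = L ^ m * (L^j)^m := by ring
            rw [e1, e3, hn]
            rw [hn] at e2
            calc _ = K ^ m * (L^j)^m * L ^ j * X j ^ (m+1) * (L ^ m * A ^ (m+1)) := by ring
              _ = _ := by rw [e2]; ring
    calc _ ≤ Y ^ χ := hstep
      _ ≤ ((K * X 0) ^ (χ ^ j)) ^ χ := Real.rpow_le_rpow hY0 ih hχ0.le
      _ = _ := by rw [← Real.rpow_mul (mul_nonneg hK0.le (hX 0)), pow_succ]

theorem moser_sup (n : ℕ) (hn : 2 ≤ n) (Λ : ℝ) (hΛ : 0 ≤ Λ) :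
    ∃ K : ℝ, 0 < K ∧ ∀ a, Ell (n := n) Λ a → ∀ H : EuclideanSpace ℝ (Fin n) → ℝ, ContDiff ℝ ∞ H →
      (∀ x, 0 < H x) → (∀ x, 0 ≤ Lop a H x) → H 0 ^ 2 ≤ K * ∫ x in Bs n 1, H x ^ 2 := by
  obtain ⟨m, rfl⟩ : ∃ m, n = m + 1 := ⟨n - 1, by omega⟩
  have hm : 1 ≤ m := by omega
  have hm0 : (0:ℝ) < m := by exact_mod_cast hm
  set χ : ℝ := ((m + 1 : ℕ) : ℝ) / m with hχ
  have hχ1 : 1 < χ := by rw [hχ, one_lt_div hm0]; push_cast; linarith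
  have hconj : Real.HolderConjugate ((m+1 : ℕ):ℝ) χ := by
    rw [Real.holderConjugate_iff]
    refine ⟨by push_cast; linarith, ?_⟩
    rw [hχ]; push_cast; field_simp
    ring
  obtain ⟨C, hC, hstep⟩ := moser_step (m+1) Λ χ hconj hΛ
  refine ⟨((2:ℝ)^(m+1))^m * (4 * C)^(m+1), by positivity, ?_⟩
  intro a ha H hH hpos hL
  set ρ : ℕ → ℝ := fun j => 1/2 + (1/2) * (1/2)^j with hρ
  set X : ℕ → ℝ := fun j => ∫ x in Bs (m+1) (ρ j), H x ^ (2 * χ ^ j) with hXdef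
  have hX : ∀ j, 0 ≤ X j := fun j => integral_nonneg fun x => Real.rpow_nonneg (hpos x).le _
  have hsm : ∀ p : ℝ, ContDiff ℝ ∞ (fun x => H x ^ p) := fun p =>
    hH.rpow_const_of_ne fun x => (hpos x).ne'
  have hXs : ∀ j, X (j+1) ≤ (4 * C * 2 ^ j * X j) ^ χ := by
    intro j
    have hp1 : 1 ≤ χ ^ j := one_le_pow₀ hχ1.le
    have h1 := hstep a ha (fun x => H x ^ (χ ^ j)) (hsm _) (fun x => Real.rpow_nonneg (hpos x).le _) (by
      intro x
      rw [Lop_comp ha hH (g := fun t => t ^ (χ^j)) (g1 := fun t => χ^j * t ^ (χ^j - 1))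
        (g2 := fun t => χ^j * ((χ^j - 1) * t ^ (χ^j - 1 - 1)))
        (fun x => Real.hasDerivAt_rpow_const (Or.inl (hpos x).ne'))
        (fun x => (Real.hasDerivAt_rpow_const (Or.inl (hpos x).ne')).const_mul _)
        (contDiff_const.mul (hsm _))]
      have := hL x
      have := (Finset.sum_nonneg (s := Finset.univ) fun i _ => sq_nonneg (gr H x i)).trans (ha.lower x (gr H x))
      have h3 := hpos x
      have h4 : 0 ≤ χ ^ j - 1 := by linarith
      positivity) (ρ (j+1)) (ρ j) (by
        simp only [hρ, pow_succ]
        have : (0:ℝ) < (1/2)^j := by positivity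
        linarith) (by
        simp only [hρ]
        have : (1/2:ℝ)^j ≤ 1 := pow_le_one₀ (by norm_num) (by norm_num)
        linarith)
    have e1 : ∀ x, ((H x ^ (χ ^ j)) ^ 2) = H x ^ (2 * χ ^ j) := fun x => by
      rw [← Real.rpow_natCast, ← Real.rpow_mul (hpos x).le]; congr 1; push_cast; ring
    have e2 : ∀ x, (H x ^ (2 * χ ^ j)) ^ χ = H x ^ (2 * χ ^ (j+1)) := fun x => by
      rw [← Real.rpow_mul (hpos x).le]; congr 1; ring
    simp only [e1, e2] at h1
    have e3 : C / (ρ j - ρ (j+1)) = 4 * C * 2 ^ j := by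
      have : ρ j - ρ (j+1) = (4 * 2 ^ j)⁻¹ := by
        simp only [hρ, pow_succ]
        rw [mul_inv, ← inv_pow]; norm_num; ring
      rw [this]; field_simp
    rw [e3] at h1
    exact h1
  have hit := iter_num (m+1) m hm rfl (4 * C) (by positivity) χ hχ X hX hXs
  set K : ℝ := ((2:ℝ)^(m+1))^m * (4 * C)^(m+1) with hK
  have hK0 : 0 < K := by positivity
  have hX0 : X 0 = ∫ x in Bs (m+1) 1, H x ^ 2 := by
    simp only [hXdef, hρ]
    norm_num
  rw [← hX0]
  by_contra! hcon
  obtain ⟨s, hs1, hs2⟩ := exists_between hcon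
  have hY0 : 0 ≤ K * X 0 := mul_nonneg hK0.le (hX 0)
  have hs0 : 0 < s := lt_of_le_of_lt hY0 hs1
  -- neighbourhood
  have hop : {x | s < H x ^ 2} ∈ nhds (0 : EuclideanSpace ℝ (Fin (m+1))) :=
    (isOpen_lt continuous_const (hH.continuous.pow 2)).mem_nhds hs2
  obtain ⟨r, hr, hball⟩ := Metric.mem_nhds_iff.1 hop
  set U := Metric.ball (0 : EuclideanSpace ℝ (Fin (m+1))) (min r (1/2)) with hU
  have hUpos : 0 < volume.real U :=
    ENNReal.toReal_pos (Metric.measure_ball_pos _ _ (by positivity)).ne' measure_ball_lt_top.ne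
  have hUsub : ∀ j, U ⊆ Bs (m+1) (ρ j) := by
    intro j x hx
    have h1 : ‖x‖ < 1/2 := (mem_ball_zero_iff.1 hx).trans_le (min_le_right _ _)
    have h2 : (0:ℝ) < (1/2) * (1/2)^j := by positivity
    change ‖x‖^2 ≤ _
    simp only [hρ]
    nlinarith [norm_nonneg x]
  have hlow : ∀ j, volume.real U * s ^ (χ ^ j) ≤ X j := by
    intro j
    have hIntg : IntegrableOn (fun x => H x ^ (2 * χ ^ j)) (Bs (m+1) (ρ j)) := intOn_Bs _ (hsm _).continuous
    calc volume.real U * s ^ (χ ^ j) = ∫ x in U, s ^ (χ ^ j) := by simp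
      _ ≤ ∫ x in U, H x ^ (2 * χ ^ j) := by
          refine setIntegral_mono_on (integrableOn_const measure_ball_lt_top.ne) (hIntg.mono_set (hUsub j)) measurableSet_ball fun x hx => ?_
          have h1 : s < H x ^ 2 := hball (Metric.ball_subset_ball (min_le_left _ _) hx)
          have h2 : H x ^ (2 * χ ^ j) = (H x ^ 2) ^ (χ ^ j) := by
            rw [Real.rpow_mul (hpos x).le]; norm_num
          rw [h2]
          exact Real.rpow_le_rpow hs0.le h1.le (by positivity)
      _ ≤ X j := setIntegral_mono_set hIntg (Filter.Eventually.of_forall fun x => Real.rpow_nonneg (hpos x).le _) (Filter.Eventually.of_forall (hUsub j))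
  have hfin : ∀ j : ℕ, K * volume.real U ≤ (K * X 0 / s) ^ (χ ^ j) := by
    intro j
    have h1 := hit j
    have h2 : (1:ℝ) ≤ ((2:ℝ)^(m+1))^j := one_le_pow₀ (one_le_pow₀ (by norm_num))
    rw [Real.div_rpow hY0 hs0.le, le_div_iff₀ (by positivity)]
    calc K * volume.real U * s ^ (χ^j) = K * 1 * (volume.real U * s ^ (χ^j)) := by ring
      _ ≤ K * ((2:ℝ)^(m+1))^j * X j := by gcongr; exact hlow j
      _ ≤ _ := h1
  have hlt : K * X 0 / s < 1 := (div_lt_one hs0).2 hs1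
  have hlim : Filter.Tendsto (fun j : ℕ => (K * X 0 / s) ^ (χ ^ j)) Filter.atTop (nhds 0) :=
    (tendsto_rpow_atTop_of_base_lt_one _ (by linarith [div_nonneg hY0 hs0.le]) hlt).comp
      (tendsto_pow_atTop_atTop_of_one_lt hχ1)
  have := ge_of_tendsto' hlim hfin
  have : 0 < K * volume.real U := by positivity
  linarith

end PartP3b

section PartP3c

open scoped ContDiff
open MeasureTheory

theorem avg_sq {g g' : ℝ → ℝ} (hg : ∀ t, HasDerivAt g (g' t) t) (hc : Continuous g') :
    (g 1 - g 0) ^ 2 ≤ ∫ t in (0:ℝ)..1, g' t ^ 2 := by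
  have h1 : ∫ t in (0:ℝ)..1, g' t = g 1 - g 0 :=
    intervalIntegral.integral_eq_sub_of_hasDerivAt (fun t _ => hg t) (hc.intervalIntegrable _ _)
  set m := g 1 - g 0 with hm
  have h2 : 0 ≤ ∫ t in (0:ℝ)..1, (g' t - m) ^ 2 :=
    intervalIntegral.integral_nonneg (by norm_num) fun t _ => sq_nonneg _
  have h3 : ∫ t in (0:ℝ)..1, (g' t - m) ^ 2 = (∫ t in (0:ℝ)..1, g' t ^ 2) - m ^ 2 := by
    have e : ∀ t, (g' t - m) ^ 2 = g' t ^ 2 - ((2 * m) * g' t - m ^ 2) := fun t => by ring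
    simp_rw [e]
    have c1 : Continuous fun t => g' t ^ 2 := hc.pow 2
    have c2 : Continuous fun t => 2 * m * g' t := continuous_const.mul hc
    have c3 : Continuous fun t => 2 * m * g' t - m ^ 2 := c2.sub continuous_const
    rw [intervalIntegral.integral_sub (c1.intervalIntegrable _ _) (c3.intervalIntegrable _ _),
      intervalIntegral.integral_sub (c2.intervalIntegrable _ _)
      (continuous_const.intervalIntegrable _ _), intervalIntegral.integral_const_mul, h1]
    simp; ring
  linarith

theorem diff_sq_le {n : ℕ} {H : EuclideanSpace ℝ (Fin n) → ℝ} (hH : ContDiff ℝ ∞ H)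
    (x z : EuclideanSpace ℝ (Fin n)) :
    ENNReal.ofReal ((H (x + z) - H x) ^ 2) ≤
      ∫⁻ t in Set.Ioc (0:ℝ) 1, ENNReal.ofReal (‖z‖ ^ 2 * ∑ i, (pd i H (x + t • z)) ^ 2) := by
  have hcd : Continuous (fun t : ℝ => fderiv ℝ H (x + t • z)) :=
    (hH.continuous_fderiv (by simp)).comp (by fun_prop)
  have hc : Continuous (fun t : ℝ => fderiv ℝ H (x + t • z) z) := hcd.clm_apply continuous_const
  have h := avg_sq (g := fun t => H (x + t • z)) (g' := fun t => fderiv ℝ H (x + t • z) z)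
    (fun t => by
      have h1 : HasDerivAt (fun t : ℝ => x + t • z) z t := by
        simpa using ((hasDerivAt_id t).smul_const z).const_add x
      exact (cd_diff hH _).hasFDerivAt.comp_hasDerivAt t h1) hc
  simp only [one_smul, zero_smul, add_zero] at h
  have hcg : Continuous (fun t : ℝ => ‖z‖ ^ 2 * ∑ i, (pd i H (x + t • z)) ^ 2) := by
    refine continuous_const.mul (continuous_finsetSum _ fun i _ => ?_)
    exact ((contDiff_pd i hH).continuous.comp (by fun_prop)).pow 2
  have h2 : ∫ t in (0:ℝ)..1, (fderiv ℝ H (x + t • z) z) ^ 2 ≤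
      ∫ t in (0:ℝ)..1, ‖z‖ ^ 2 * ∑ i, (pd i H (x + t • z)) ^ 2 := by
    refine intervalIntegral.integral_mono_on (by norm_num) ((hc.pow 2).intervalIntegrable _ _)
      (hcg.intervalIntegrable _ _) fun t _ => ?_
    have h3 := (fderiv ℝ H (x + t • z)).le_opNorm z
    have h4 := norm_fderiv_sq_le H (x + t • z)
    calc (fderiv ℝ H (x + t • z) z) ^ 2 = ‖fderiv ℝ H (x + t • z) z‖ ^ 2 := by simp
      _ ≤ (‖fderiv ℝ H (x + t • z)‖ * ‖z‖) ^ 2 := by gcongr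
      _ = ‖z‖ ^ 2 * ‖fderiv ℝ H (x + t • z)‖ ^ 2 := by ring
      _ ≤ _ := by gcongr
  rw [← ofReal_integral_eq_lintegral_ofReal, ← intervalIntegral.integral_of_le (by norm_num)]
  · exact ENNReal.ofReal_le_ofReal (h.trans h2)
  · exact (hcg.integrableOn_Icc).mono_set Set.Ioc_subset_Icc_self
  · refine Filter.Eventually.of_forall fun t => ?_
    exact mul_nonneg (sq_nonneg _) (Finset.sum_nonneg fun i _ => sq_nonneg _)

theorem mem_Bs_iff {n : ℕ} {r : ℝ} (hr : 0 ≤ r) (x : EuclideanSpace ℝ (Fin n)) :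
    x ∈ Bs n (r ^ 2) ↔ ‖x‖ ≤ r := by
  change ‖x‖ ^ 2 ≤ r ^ 2 ↔ _
  exact sq_le_sq₀ (norm_nonneg _) hr

theorem meas_Bs (n : ℕ) (ρ : ℝ) : MeasurableSet (Bs n ρ) := (isClosed_Bs n ρ).measurableSet

theorem poincare {n : ℕ} {H : EuclideanSpace ℝ (Fin n) → ℝ} (hH : ContDiff ℝ ∞ H) :
    ∫⁻ x in Bs n (1^2), ∫⁻ y in Bs n (1^2), ENNReal.ofReal ((H y - H x) ^ 2) ≤
      volume (Bs n (2^2)) * (4 * ∫⁻ x in Bs n (3^2), ENNReal.ofReal (∑ i, (pd i H x) ^ 2)) := by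
  have hcG : Continuous (fun x => ∑ i, (pd i H x) ^ 2) :=
    continuous_finsetSum _ fun i _ => (contDiff_pd i hH).continuous.pow 2
  have step1 : ∀ x ∈ Bs n (1^2), ∫⁻ y in Bs n (1^2), ENNReal.ofReal ((H y - H x) ^ 2) ≤
      ∫⁻ z in Bs n (2^2), ENNReal.ofReal ((H (x + z) - H x) ^ 2) := by
    intro x hx
    rw [← lintegral_indicator (meas_Bs _ _), ← lintegral_indicator (meas_Bs _ _),
      ← lintegral_add_left_eq_self _ x]
    refine lintegral_mono fun z => ?_
    by_cases hz : x + z ∈ Bs n (1^2)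
    · have hz2 : z ∈ Bs n (2^2) := by
        rw [mem_Bs_iff (by norm_num)] at *
        calc ‖z‖ = ‖(x + z) - x‖ := by congr 1; abel
          _ ≤ ‖x + z‖ + ‖x‖ := norm_sub_le _ _
          _ ≤ 2 := by linarith
      rw [Set.indicator_of_mem hz, Set.indicator_of_mem hz2]
    · rw [Set.indicator_of_notMem hz]; exact zero_le
  have step2 : ∀ z ∈ Bs n (2^2), ∫⁻ x in Bs n (1^2), ENNReal.ofReal ((H (x + z) - H x) ^ 2) ≤
      4 * ∫⁻ x in Bs n (3^2), ENNReal.ofReal (∑ i, (pd i H x) ^ 2) := by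
    intro z hz
    rw [mem_Bs_iff (by norm_num)] at hz
    calc _ ≤ ∫⁻ x in Bs n (1^2), ∫⁻ t in Set.Ioc (0:ℝ) 1, ENNReal.ofReal (‖z‖ ^ 2 * ∑ i, (pd i H (x + t • z)) ^ 2) :=
          lintegral_mono fun x => diff_sq_le hH x z
      _ = ∫⁻ t in Set.Ioc (0:ℝ) 1, ∫⁻ x in Bs n (1^2), ENNReal.ofReal (‖z‖ ^ 2 * ∑ i, (pd i H (x + t • z)) ^ 2) := by
          rw [lintegral_lintegral_swap]
          refine Continuous.aemeasurable ?_
          refine ENNReal.continuous_ofReal.comp (continuous_const.mul ?_)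
          exact hcG.comp (by fun_prop : Continuous fun p : EuclideanSpace ℝ (Fin n) × ℝ => p.1 + p.2 • z)
      _ ≤ ∫⁻ t in Set.Ioc (0:ℝ) 1, 4 * ∫⁻ x in Bs n (3^2), ENNReal.ofReal (∑ i, (pd i H x) ^ 2) := by
          refine setLIntegral_mono measurable_const fun t ht => ?_
          have hm1 : Measurable fun x => ENNReal.ofReal (∑ i, (pd i H x) ^ 2) :=
            (ENNReal.continuous_ofReal.comp hcG).measurable
          rw [← lintegral_const_mul _ hm1,
            ← lintegral_indicator (meas_Bs _ _), ← lintegral_indicator (meas_Bs _ _)]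
          rw [← lintegral_add_right_eq_self (Set.indicator (Bs n (3^2)) _) (t • z)]
          refine lintegral_mono fun x => ?_
          by_cases hx : x ∈ Bs n (1^2)
          · have hx2 : x + t • z ∈ Bs n (3^2) := by
              rw [mem_Bs_iff (by norm_num)] at *
              have : ‖t • z‖ ≤ 1 * 2 := by
                rw [norm_smul, Real.norm_of_nonneg ht.1.le]
                exact mul_le_mul ht.2 hz (norm_nonneg _) (by norm_num)
              linarith [norm_add_le x (t • z)]
            rw [Set.indicator_of_mem hx, Set.indicator_of_mem hx2]
            rw [ENNReal.ofReal_mul (by positivity)]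
            gcongr
            rw [show (4:ENNReal) = ENNReal.ofReal 4 by simp]
            exact ENNReal.ofReal_le_ofReal (by nlinarith [norm_nonneg z])
          · rw [Set.indicator_of_notMem hx]; exact zero_le
      _ = _ := by simp
  calc _ ≤ ∫⁻ x in Bs n (1^2), ∫⁻ z in Bs n (2^2), ENNReal.ofReal ((H (x + z) - H x) ^ 2) :=
        setLIntegral_mono' (meas_Bs _ _) step1
    _ = ∫⁻ z in Bs n (2^2), ∫⁻ x in Bs n (1^2), ENNReal.ofReal ((H (x + z) - H x) ^ 2) := by
        rw [lintegral_lintegral_swap]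
        refine Continuous.aemeasurable ?_
        refine ENNReal.continuous_ofReal.comp (Continuous.pow (Continuous.sub ?_ ?_) 2)
        · exact hH.continuous.comp (by fun_prop : Continuous fun p : EuclideanSpace ℝ (Fin n) × EuclideanSpace ℝ (Fin n) => p.1 + p.2)
        · exact hH.continuous.comp continuous_fst
    _ ≤ ∫⁻ z in Bs n (2^2), 4 * ∫⁻ x in Bs n (3^2), ENNReal.ofReal (∑ i, (pd i H x) ^ 2) :=
        setLIntegral_mono' (meas_Bs _ _) step2
    _ = _ := by simp [mul_comm]

theorem poincare_Z {n : ℕ} {H : EuclideanSpace ℝ (Fin n) → ℝ} (hH : ContDiff ℝ ∞ H)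
    (h0 : ∀ x, 0 ≤ H x) {Z : Set (EuclideanSpace ℝ (Fin n))} (hZm : MeasurableSet Z)
    (hZ : Z ⊆ Bs n (1^2)) (hHZ : ∀ x ∈ Z, H x ≤ 1) {θ E : ℝ} (hθ : 0 ≤ θ)
    (hvol : ENNReal.ofReal θ ≤ volume Z)
    (hE : ∫ x in Bs n (3^2), ∑ i, (pd i H x) ^ 2 ≤ E) :
    θ * ∫ x in Bs n (1^2), H x ^ 2 ≤
      2 * volume.real (Bs n (1^2)) ^ 2 + 8 * volume.real (Bs n (2^2)) * E := by
  have hcG : Continuous (fun x => ∑ i, (pd i H x) ^ 2) :=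
    continuous_finsetSum _ fun i _ => (contDiff_pd i hH).continuous.pow 2
  have hE0 : 0 ≤ E := le_trans (integral_nonneg fun x => Finset.sum_nonneg fun i _ => sq_nonneg _) hE
  have hfin : ∀ r, volume (Bs n r) = ENNReal.ofReal (volume.real (Bs n r)) := fun r =>
    (ofReal_measureReal (isCompact_Bs n r).measure_lt_top.ne).symm
  have key : ENNReal.ofReal (θ * ∫ x in Bs n (1^2), H x ^ 2) ≤
      ENNReal.ofReal (2 * volume.real (Bs n (1^2)) ^ 2 + 8 * volume.real (Bs n (2^2)) * E) := by
    have hmm : Measurable fun p : EuclideanSpace ℝ (Fin n) × EuclideanSpace ℝ (Fin n) =>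
        ENNReal.ofReal ((H p.2 - H p.1) ^ 2) :=
      (ENNReal.continuous_ofReal.comp (((hH.continuous.comp continuous_snd).sub (hH.continuous.comp continuous_fst)).pow 2)).measurable
    have c1 : Continuous fun x => H x ^ 2 := hH.continuous.pow 2
    have m1 : Measurable fun x => ENNReal.ofReal (H x ^ 2) :=
      (ENNReal.continuous_ofReal.comp c1).measurable
    rw [ENNReal.ofReal_mul hθ, ofReal_integral_eq_lintegral_ofReal (intOn_Bs _ c1)
      (Filter.Eventually.of_forall fun x => sq_nonneg _),
      ← lintegral_const_mul _ m1]
    have hx : ∀ x, ENNReal.ofReal θ * ENNReal.ofReal (H x ^ 2) ≤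
        2 * volume (Bs n (1^2)) + 2 * ∫⁻ y in Bs n (1^2), ENNReal.ofReal ((H y - H x) ^ 2) := by
      intro x
      have hmx : Measurable fun y => ENNReal.ofReal ((H y - H x) ^ 2) :=
        (ENNReal.continuous_ofReal.comp ((hH.continuous.sub continuous_const).pow 2)).measurable
      calc _ ≤ volume Z * ENNReal.ofReal (H x ^ 2) := by gcongr
        _ = ∫⁻ y in Z, ENNReal.ofReal (H x ^ 2) := by simp [mul_comm]
        _ ≤ ∫⁻ y in Z, (2 + 2 * ENNReal.ofReal ((H y - H x) ^ 2)) := by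
            refine setLIntegral_mono' hZm fun y hy => ?_
            have e : (2:ENNReal) + 2 * ENNReal.ofReal ((H y - H x) ^ 2) = ENNReal.ofReal (2 + 2 * (H y - H x)^2) := by
              rw [ENNReal.ofReal_add (by norm_num) (by positivity), ENNReal.ofReal_mul (by norm_num)]; simp
            rw [e]
            apply ENNReal.ofReal_le_ofReal
            have := hHZ y hy
            have := h0 y
            nlinarith [sq_nonneg (2 * H y - H x)]
        _ ≤ ∫⁻ y in Bs n (1^2), (2 + 2 * ENNReal.ofReal ((H y - H x) ^ 2)) := lintegral_mono_set hZ
        _ = _ := by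
            rw [lintegral_add_left measurable_const, lintegral_const_mul _ hmx]; simp
    calc _ ≤ ∫⁻ x in Bs n (1^2), (2 * volume (Bs n (1^2)) + 2 * ∫⁻ y in Bs n (1^2), ENNReal.ofReal ((H y - H x) ^ 2)) :=
          lintegral_mono hx
      _ = 2 * volume (Bs n (1^2)) * volume (Bs n (1^2)) + 2 * ∫⁻ x in Bs n (1^2), ∫⁻ y in Bs n (1^2), ENNReal.ofReal ((H y - H x) ^ 2) := by
          have m2 : Measurable fun x => ∫⁻ y in Bs n (1^2), ENNReal.ofReal ((H y - H x) ^ 2) :=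
            hmm.lintegral_prod_right'
          rw [lintegral_add_left measurable_const, lintegral_const_mul _ m2, setLIntegral_const]
      _ ≤ 2 * volume (Bs n (1^2)) * volume (Bs n (1^2)) + 2 * (volume (Bs n (2^2)) * (4 * ENNReal.ofReal E)) := by
          gcongr
          refine (poincare hH).trans ?_
          gcongr
          rw [← ofReal_integral_eq_lintegral_ofReal (intOn_Bs _ hcG)
            (Filter.Eventually.of_forall fun x => Finset.sum_nonneg fun i _ => sq_nonneg _)]
          exact ENNReal.ofReal_le_ofReal hE
      _ = _ := by
          rw [hfin (1^2), hfin (2^2), ENNReal.ofReal_add (by positivity) (by positivity),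
            ENNReal.ofReal_mul (by norm_num), ENNReal.ofReal_mul (by positivity), ENNReal.ofReal_mul (by norm_num), ENNReal.ofReal_pow (by positivity)]
          have : ENNReal.ofReal 8 = 2 * 4 := by norm_num
          rw [this]; norm_num; ring
  exact (ENNReal.ofReal_le_ofReal_iff (by positivity)).1 key

theorem harnack (n : ℕ) (hn : 2 ≤ n) (Λ : ℝ) (hΛ : 0 ≤ Λ) (θ : ℝ) (hθ : 0 < θ) :
    ∃ c : ℝ, 0 < c ∧ ∀ a, Ell (n := n) Λ a → ∀ v : EuclideanSpace ℝ (Fin n) → ℝ, ContDiff ℝ ∞ v →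
      (∀ x, 0 ≤ v x) → (∀ x, Lop a v x ≤ 0) →
      ENNReal.ofReal θ ≤ volume ({x | 1 ≤ v x} ∩ Bs n (1^2)) → c ≤ v 0 := by
  obtain ⟨K1, hK1, hsup⟩ := moser_sup n hn Λ hΛ
  obtain ⟨K, hK, hcut⟩ := cutoff n
  obtain ⟨φ, hφ, hc, hφ0, hφ1, hφe, hφz, hφz', hφb⟩ := hcut 9 16 (by norm_num) le_rfl
  set E := 4 * Λ * ∫ x, ∑ i, (pd i φ x) ^ 2 with hE
  have hE0 : 0 ≤ E := mul_nonneg (by positivity) (integral_nonneg fun x => Finset.sum_nonneg fun i _ => sq_nonneg _)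
  set M := K1 * ((2 * volume.real (Bs n (1^2)) ^ 2 + 8 * volume.real (Bs n (2^2)) * E) / θ) with hM
  have hM0 : 0 ≤ M := by positivity
  refine ⟨Real.exp (-(M + 1)), by positivity, ?_⟩
  intro a ha v hv hv0 hLv hvol
  refine le_of_forall_pos_le_add fun η hη => ?_
  have hp1 : ∀ x, 0 < v x + η := fun x => by linarith [hv0 x]
  have hp2 : ∀ x, 0 < v x + η + 1 := fun x => by linarith [hv0 x]
  have s1 : ContDiff ℝ ∞ fun x => v x + η := hv.add contDiff_const
  have s2 : ContDiff ℝ ∞ fun x => v x + η + 1 := s1.add contDiff_const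
  set H : EuclideanSpace ℝ (Fin n) → ℝ := fun x => Real.log (v x + η + 1) - Real.log (v x + η) with hHdef
  have hH : ContDiff ℝ ∞ H := (s2.log fun x => (hp2 x).ne').sub (s1.log fun x => (hp1 x).ne')
  have hpos : ∀ x, 0 < H x := fun x => by
    have := Real.log_lt_log (hp1 x) (by linarith : v x + η < v x + η + 1)
    simp only [hHdef]; linarith
  set g1 : ℝ → ℝ := fun t => (t + η + 1)⁻¹ - (t + η)⁻¹ with hg1
  set g2 : ℝ → ℝ := fun t => -1 / (t + η + 1) ^ 2 - -1 / (t + η) ^ 2 with hg2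
  have hd0 : ∀ t, HasDerivAt (fun t : ℝ => t + η) 1 t := fun t => (hasDerivAt_id t).add_const η
  have hd1 : ∀ t, HasDerivAt (fun t : ℝ => t + η + 1) 1 t := fun t => (hd0 t).add_const 1
  have D1 : ∀ x, HasDerivAt (fun t => Real.log (t + η + 1) - Real.log (t + η)) (g1 (v x)) (v x) := by
    intro x
    have := ((hd1 (v x)).log (hp2 x).ne').sub ((hd0 (v x)).log (hp1 x).ne')
    simp only [one_div] at this
    exact this
  have D2 : ∀ x, HasDerivAt g1 (g2 (v x)) (v x) := by
    intro x
    exact ((hd1 (v x)).fun_inv (hp2 x).ne').sub ((hd0 (v x)).fun_inv (hp1 x).ne')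
  have hgs : ContDiff ℝ ∞ fun x => g1 (v x) :=
    (s2.inv fun x => (hp2 x).ne').sub (s1.inv fun x => (hp1 x).ne')
  have hBv : ∀ x, 0 ≤ Bf (a x) (gr v x) (gr v x) := fun x =>
    (Finset.sum_nonneg fun i _ => sq_nonneg _).trans (ha.lower x _)
  have hLH : ∀ x, Bf (a x) (gr H x) (gr H x) ≤ Lop a H x := by
    intro x
    have e1 : Lop a H x = _ := Lop_comp ha hv D1 D2 hgs x
    have e2 : gr H x = fun i => g1 (v x) * gr v x i + 0 * gr v x i := by
      ext i
      have : pd i H x = _ := pd_comp i hv x (D1 x)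
      simp [gr, this]
    rw [e1, e2, Bf_sq (ha.symm x)]
    have hq : (v x + η + 1)⁻¹ ≤ (v x + η)⁻¹ := inv_anti₀ (hp1 x) (by linarith)
    have hq0 : 0 < (v x + η + 1)⁻¹ := inv_pos.2 (hp2 x)
    have hg1n : g1 (v x) ≤ 0 := by simp only [hg1]; linarith
    have hg12 : g1 (v x) ^ 2 ≤ g2 (v x) := by
      simp only [hg1, hg2]
      have : -1 / (v x + η + 1) ^ 2 - -1 / (v x + η) ^ 2 = ((v x + η)⁻¹)^2 - ((v x + η + 1)⁻¹)^2 := by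
        rw [inv_pow, inv_pow]; ring
      rw [this]; nlinarith
    have := mul_nonneg_of_nonpos_of_nonpos hg1n (hLv x)
    have := mul_le_mul_of_nonneg_right hg12 (hBv x)
    nlinarith
  have hLH0 : ∀ x, 0 ≤ Lop a H x := fun x =>
    ((Finset.sum_nonneg fun i _ => sq_nonneg _).trans (ha.lower x _)).trans (hLH x)
  have hen := log_energy ha hH hLH hφ hc
  have hφ2 : HasCompactSupport (fun x => φ x ^ 2) := hc.comp_left (g := fun t => t ^ 2) (by simp)
  have hcG : Continuous (fun x => ∑ i, (pd i H x) ^ 2) :=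
    continuous_finsetSum _ fun i _ => (contDiff_pd i hH).continuous.pow 2
  have hEb : ∫ x in Bs n (3^2), ∑ i, (pd i H x) ^ 2 ≤ E := by
    refine le_trans ?_ hen
    have k1 : Integrable (fun x => φ x ^ 2 * ∑ i, (pd i H x) ^ 2) :=
      Continuous.integrable_of_hasCompactSupport ((hφ.continuous.pow 2).mul hcG) hφ2.mul_right
    calc _ = ∫ x in Bs n (3^2), φ x ^ 2 * ∑ i, (pd i H x) ^ 2 := by
          refine setIntegral_congr_fun (meas_Bs _ _) fun x hx => ?_
          have : φ x = 1 := hφe x (by convert hx using 2; norm_num)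
          simp [this]
      _ ≤ _ := setIntegral_le_integral k1 (Filter.Eventually.of_forall fun x =>
          mul_nonneg (sq_nonneg _) (Finset.sum_nonneg fun i _ => sq_nonneg _))
  have hPo := poincare_Z hH (fun x => (hpos x).le) (Z := {x | 1 ≤ v x} ∩ Bs n (1^2))
    ((isClosed_le continuous_const hv.continuous).measurableSet.inter (meas_Bs _ _))
    Set.inter_subset_right (by
      rintro x ⟨hx, -⟩
      have hx : 1 ≤ v x := hx
      have h1 : H x = Real.log ((v x + η + 1) / (v x + η)) := by
        rw [Real.log_div (hp2 x).ne' (hp1 x).ne']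
      rw [h1]
      refine (Real.log_le_sub_one_of_pos (div_pos (hp2 x) (hp1 x))).trans ?_
      rw [sub_le_iff_le_add, div_le_iff₀ (hp1 x)]; linarith) hθ.le hvol hEb
  have hfin := hsup a ha H hH hpos hLH0
  have h2 : H 0 ^ 2 ≤ M := by
    refine hfin.trans ?_
    rw [hM]
    gcongr
    rw [le_div_iff₀ hθ]
    simp only [one_pow] at hPo ⊢
    linarith
  have h3 : H 0 ≤ M + 1 := by nlinarith
  have h4 : Real.log (v 0 + η + 1) ≤ (M + 1) + Real.log (v 0 + η) := by
    simp only [hHdef] at h3; linarith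
  have h5 : v 0 + η + 1 ≤ Real.exp (M + 1) * (v 0 + η) := by
    rw [← Real.log_le_log_iff (hp2 0) (by have := hp1 0; positivity), Real.log_mul (by positivity) (hp1 0).ne', Real.log_exp]
    exact h4
  rw [Real.exp_neg, inv_le_iff_one_le_mul₀ (by positivity)]
  have := hp1 0
  linarith

end PartP3c

section PartP4

open scoped ContDiff Matrix
open MeasureTheory

/-- determinant as a function on tuples of rows -/
noncomputable def dt (n : ℕ) (A : Fin n → Fin n → ℝ) : ℝ := (Matrix.of A).det

/-- adjugate entry as a function on tuples of rows -/
noncomputable def aj (n : ℕ) (i j : Fin n) (A : Fin n → Fin n → ℝ) : ℝ := (Matrix.of A).adjugate i j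

theorem contDiff_dt (n : ℕ) : ContDiff ℝ ∞ (dt n) := by
  unfold dt
  simp_rw [Matrix.det_apply']
  refine ContDiff.sum fun σ _ => contDiff_const.mul (contDiff_prod fun i _ => ?_)
  exact (contDiff_apply_apply ℝ ℝ (σ i) i)

theorem contDiff_aj (n : ℕ) (i j : Fin n) : ContDiff ℝ ∞ (aj n i j) := by
  have : aj n i j = fun A => dt n (fun p q => (Matrix.of A).updateRow j (Pi.single i 1) p q) := by
    ext A; rw [aj, Matrix.adjugate_apply]; rfl
  rw [this]
  refine (contDiff_dt n).comp ?_
  rw [contDiff_pi]; intro p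
  rw [contDiff_pi]; intro q
  by_cases h : p = j
  · subst h; simp only [Matrix.updateRow_self]; exact contDiff_const
  · simp only [Matrix.updateRow_ne h]; exact contDiff_apply_apply ℝ ℝ p q

theorem fderiv_dt (n : ℕ) (A B : Fin n → Fin n → ℝ) :
    fderiv ℝ (dt n) A B = ∑ i, ∑ j, (Matrix.of A).adjugate j i * B i j := by
  set F : ContinuousMultilinearMap ℝ (fun _ : Fin n => (Fin n → ℝ)) ℝ :=
    ⟨(Matrix.detRowAlternating (R := ℝ) (n := Fin n)).toMultilinearMap, (contDiff_dt n).continuous⟩ with hF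
  have h1 : (dt n) = F := rfl
  have h2 := (F.hasFDerivAt A).fderiv
  rw [h1, h2, ContinuousMultilinearMap.linearDeriv_apply]
  refine Finset.sum_congr rfl fun i _ => ?_
  have h3 : F (Function.update A i (B i)) = ((Matrix.of A).updateRow i (B i)).det := rfl
  have h4 : ((Matrix.of A).updateRow i (B i)).det = ((Matrix.of A)ᵀ.cramer (B i)) i :=
    (Matrix.cramer_transpose_apply _ _ _).symm
  have h5 : ((Matrix.of A)ᵀ.cramer (B i)) i = ∑ j, (Matrix.of A)ᵀ.adjugate i j * B i j := by
    rw [Matrix.cramer_eq_adjugate_mulVec]; rfl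
  have h6 : ∀ j, (Matrix.of A)ᵀ.adjugate i j = (Matrix.of A).adjugate j i := fun j => by
    rw [← Matrix.adjugate_transpose]; rfl
  refine (h3.trans (h4.trans h5)).trans ?_
  exact Finset.sum_congr rfl fun j _ => by rw [h6 j]

theorem fderiv_aj_rel (n : ℕ) (A B : Fin n → Fin n → ℝ) (i j : Fin n) :
    ∑ k, (fderiv ℝ (aj n i k) A B * A k j + aj n i k A * B k j) =
      (∑ p, ∑ q, (Matrix.of A).adjugate q p * B p q) * (if i = j then 1 else 0) := by
  have hid : (fun X : Fin n → Fin n → ℝ => ∑ k, aj n i k X * X k j) =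
      fun X => dt n X * (if i = j then 1 else 0) := by
    ext X
    have := congrFun (congrFun (Matrix.adjugate_mul (Matrix.of X)) i) j
    simp only [Matrix.mul_apply, Matrix.smul_apply, Matrix.one_apply, smul_eq_mul] at this
    exact this
  have hl : fderiv ℝ (fun X : Fin n → Fin n → ℝ => ∑ k, aj n i k X * X k j) A B =
      ∑ k, (fderiv ℝ (aj n i k) A B * A k j + aj n i k A * B k j) := by
    have hd : ∀ k, HasFDerivAt (fun X : Fin n → Fin n → ℝ => X k j)
        ((ContinuousLinearMap.proj (R := ℝ) (φ := fun _ : Fin n => ℝ) j).comp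
          (ContinuousLinearMap.proj (R := ℝ) (φ := fun _ : Fin n => Fin n → ℝ) k)) A := fun k =>
      ((ContinuousLinearMap.proj (R := ℝ) (φ := fun _ : Fin n => ℝ) j).comp
          (ContinuousLinearMap.proj (R := ℝ) (φ := fun _ : Fin n => Fin n → ℝ) k)).hasFDerivAt
    have hd2 : ∀ k, HasFDerivAt (aj n i k) (fderiv ℝ (aj n i k) A) A := fun k =>
      ((contDiff_aj n i k).differentiable (by simp) A).hasFDerivAt
    have := (HasFDerivAt.fun_sum (u := Finset.univ) fun k _ => (hd2 k).fun_mul (hd k)).fderiv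
    rw [this]
    simp only [ContinuousLinearMap.sum_apply]
    refine Finset.sum_congr rfl fun k _ => ?_
    simp; ring
  have hr : fderiv ℝ (fun X : Fin n → Fin n → ℝ => dt n X * (if i = j then 1 else 0)) A B =
      fderiv ℝ (dt n) A B * (if i = j then 1 else 0) := by
    have := (((contDiff_dt n).differentiable (by simp) A).hasFDerivAt.mul_const (if i = j then (1:ℝ) else 0)).fderiv
    rw [this, mul_comm]; rfl
  rw [← hl, hid, hr, fderiv_dt]

/-- derivative of the adjugate -/
noncomputable def Dj (n : ℕ) (A B : Matrix (Fin n) (Fin n) ℝ) : Matrix (Fin n) (Fin n) ℝ :=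
  Matrix.of fun i j => fderiv ℝ (aj n i j) (fun p q => A p q) (fun p q => B p q)

theorem Dj_mul (n : ℕ) (A B : Matrix (Fin n) (Fin n) ℝ) :
    Dj n A B * A + A.adjugate * B = ((A.adjugate * B).trace) • (1 : Matrix (Fin n) (Fin n) ℝ) := by
  ext i j
  have h := fderiv_aj_rel n (fun p q => A p q) (fun p q => B p q) i j
  have hc : ∑ p, ∑ q, (Matrix.of fun p q => A p q).adjugate q p * B p q =
      ∑ q, ∑ p, (Matrix.of fun p q => A p q).adjugate q p * B p q := Finset.sum_comm
  rw [hc] at h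
  simp only [Matrix.add_apply, Matrix.mul_apply, Dj, Matrix.smul_apply, Matrix.one_apply, smul_eq_mul,
    Matrix.trace, Matrix.diag, Matrix.of_apply, ← Finset.sum_add_distrib]
  exact h

theorem Dj_of_det (n : ℕ) (A B : Matrix (Fin n) (Fin n) ℝ) (hA : A.det ≠ 0) :
    Dj n A B = A.det • ((A⁻¹ * B).trace • A⁻¹ - A⁻¹ * B * A⁻¹) := by
  have hu : IsUnit A.det := hA.isUnit
  have hadj : A.adjugate = A.det • A⁻¹ := by
    rw [Matrix.inv_def, smul_smul, Ring.mul_inverse_cancel _ hu, one_smul]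
  have h := Dj_mul n A B
  have h1 : Dj n A B * A = ((A.adjugate * B).trace) • (1 : Matrix (Fin n) (Fin n) ℝ) - A.adjugate * B :=
    eq_sub_of_add_eq h
  calc Dj n A B = Dj n A B * A * A⁻¹ := by rw [Matrix.mul_assoc, Matrix.mul_nonsing_inv _ hu, Matrix.mul_one]
    _ = _ := by
      rw [h1, hadj]
      simp [Matrix.sub_mul, smul_sub, smul_smul]

theorem Dj_continuous (n : ℕ) (B : Matrix (Fin n) (Fin n) ℝ) (i j : Fin n) :
    Continuous (fun A : Matrix (Fin n) (Fin n) ℝ => Dj n A B i j) := by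
  have h1 : Continuous (fun A : Fin n → Fin n → ℝ => fderiv ℝ (aj n i j) A) :=
    (contDiff_aj n i j).continuous_fderiv (by simp)
  have h2 : Continuous (fun A : Matrix (Fin n) (Fin n) ℝ => (fun p q => A p q : Fin n → Fin n → ℝ)) :=
    continuous_pi fun p => continuous_pi fun q => continuous_id.matrix_elem p q
  exact (h1.comp h2).clm_apply continuous_const

theorem Dj_sum_smul (n : ℕ) (A : Matrix (Fin n) (Fin n) ℝ) (T : Fin n → Matrix (Fin n) (Fin n) ℝ)
    (v : Fin n → ℝ) (i j : Fin n) :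
    Dj n A (∑ p, v p • T p) i j = ∑ p, v p * Dj n A (T p) i j := by
  have e : (fun a c => (∑ p, v p • T p) a c : Fin n → Fin n → ℝ) = ∑ p, v p • (fun a c => T p a c) := by
    ext a c; simp [Matrix.sum_apply, Finset.sum_apply]
  simp only [Dj, Matrix.of_apply]
  rw [e, map_sum]
  exact Finset.sum_congr rfl fun p _ => by rw [map_smul]; rfl

theorem posDef_add_smul {n : ℕ} {A : Matrix (Fin n) (Fin n) ℝ} (hA : A.PosSemidef) {t : ℝ} (ht : 0 < t) :
    (A + t • (1 : Matrix (Fin n) (Fin n) ℝ)).PosDef := 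
  Matrix.PosDef.posSemidef_add hA (Matrix.PosDef.one.smul ht)

theorem tendsto_add_smul {n : ℕ} (A : Matrix (Fin n) (Fin n) ℝ) :
    Filter.Tendsto (fun t : ℝ => A + t • (1 : Matrix (Fin n) (Fin n) ℝ)) (nhdsWithin 0 (Set.Ioi 0)) (nhds A) := by
  have : Continuous (fun t : ℝ => A + t • (1 : Matrix (Fin n) (Fin n) ℝ)) := by fun_prop
  have h := this.tendsto 0
  simp only [zero_smul, add_zero] at h
  exact h.mono_left nhdsWithin_le_nhds

theorem piola_alg (n : ℕ) (A : Matrix (Fin n) (Fin n) ℝ) (hA : A.PosSemidef)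
    (T : Fin n → Matrix (Fin n) (Fin n) ℝ) (hT1 : ∀ i p q, T i p q = T i q p)
    (hT2 : ∀ i p q, T i p q = T p i q) (j : Fin n) :
    ∑ i, Dj n A (T i) i j = 0 := by
  have hpd : ∀ A : Matrix (Fin n) (Fin n) ℝ, A.PosDef → ∑ i, Dj n A (T i) i j = 0 := by
    intro A hA
    have hsym : ∀ p q, A⁻¹ p q = A⁻¹ q p := fun p q => by
      have := hA.inv.isHermitian.apply p q; simpa using this.symm
    simp_rw [Dj_of_det n A _ hA.det_pos.ne']
    simp only [Matrix.smul_apply, Matrix.sub_apply, smul_eq_mul, ← Finset.mul_sum]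
    apply mul_eq_zero_of_right
    rw [Finset.sum_sub_distrib, sub_eq_zero]
    simp only [Matrix.trace, Matrix.diag, Matrix.mul_apply, Finset.sum_mul]
    calc _ = ∑ i, ∑ p, ∑ q, A⁻¹ p q * T i q p * A⁻¹ i j := rfl
      _ = ∑ p, ∑ q, ∑ i, A⁻¹ p q * T i q p * A⁻¹ i j := by
          rw [Finset.sum_comm]
          exact Finset.sum_congr rfl fun p _ => Finset.sum_comm
      _ = ∑ p, ∑ i, ∑ q, A⁻¹ p q * T i q p * A⁻¹ i j := 
          Finset.sum_congr rfl fun p _ => Finset.sum_comm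
      _ = _ := by
          refine Finset.sum_congr rfl fun p _ => Finset.sum_congr rfl fun i _ => Finset.sum_congr rfl fun q _ => ?_
          rw [hT2 i q p, hT1 q i p, hT2 q p i, hT2 p q i]
  have hlim : Filter.Tendsto (fun t : ℝ => ∑ i, Dj n (A + t • (1 : Matrix (Fin n) (Fin n) ℝ)) (T i) i j)
      (nhdsWithin 0 (Set.Ioi 0)) (nhds (∑ i, Dj n A (T i) i j)) := by
    refine tendsto_finsetSum _ fun i _ => ?_
    exact ((Dj_continuous n (T i) i j).tendsto A).comp (tendsto_add_smul A)
  refine tendsto_nhds_unique hlim (tendsto_const_nhds.congr' ?_)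
  filter_upwards [self_mem_nhdsWithin] with t ht
  exact (hpd _ (posDef_add_smul hA ht)).symm

end PartP4

section PartP4b

open scoped ContDiff Matrix
open MeasureTheory

theorem pair_coef {B δ l m D : ℝ} (hB : 0 ≤ B) (hδ : 0 < δ) (hBδ : 2 * δ * B ≤ 1) (hl : 0 < l)
    (hm : 0 < m) (hD : 0 ≤ D) (hDB : D ≤ B * l * m) :
    0 ≤ (2 * (1 + D / l) / (m + δ) - D / (l * m)) + (2 * (1 + D / m) / (l + δ) - D / (m * l)) := by
  have e : (2 * (1 + D / l) / (m + δ) - D / (l * m)) + (2 * (1 + D / m) / (l + δ) - D / (m * l)) =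
      2 * ((l * m) * (l + m + 2 * δ) + D * (l * m - δ ^ 2)) / ((l * m) * (l + δ) * (m + δ)) := by
    field_simp
    ring
  rw [e]
  refine div_nonneg ?_ (by positivity)
  have hlm : 0 < l * m := mul_pos hl hm
  by_cases h : δ ^ 2 ≤ l * m
  · have := mul_nonneg hD (sub_nonneg.2 h)
    positivity
  · push Not at h
    have h1 : D * (δ ^ 2 - l * m) ≤ B * l * m * (δ ^ 2 - l * m) :=
      mul_le_mul_of_nonneg_right hDB (by linarith)
    have h2 : B * δ ^ 2 ≤ δ := by nlinarith
    have h3 : B * (δ ^ 2 - l * m) ≤ l + m + 2 * δ := by nlinarith [mul_nonneg hB hlm.le]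
    have h4 : (l * m) * (B * (δ ^ 2 - l * m)) ≤ (l * m) * (l + m + 2 * δ) :=
      mul_le_mul_of_nonneg_left h3 hlm.le
    nlinarith

theorem diag_key (n : ℕ) {B ε δ D : ℝ} (hB : 0 ≤ B) (hε : 0 < ε) (hδ : 0 < δ)
    (h1 : (n:ℝ) * B * ε ≤ 2 / 3) (h2 : δ ≤ ε) (h3 : n * B * δ ≤ ε) (h4 : δ ≤ 1)
    (l x : Fin n → ℝ) (hl : ∀ i, 0 < l i) (hl2 : ∀ i, l i ≤ 2) (hD : 0 ≤ D)
    (hD2 : ∀ i j, i ≠ j → D ≤ B * l i * l j)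
    (hD3 : ∀ i j k, i ≠ j → i ≠ k → j ≠ k → D ≤ B * l i * l j * l k) :
    0 ≤ D * (∑ i, x i / l i) ^ 2 + ∑ i, (2 * (1 + D / l i) / (l i + δ) - D / (l i * l i)) * x i ^ 2 := by
  by_cases hall : ∀ i, δ ≤ l i
  · refine add_nonneg (by positivity) (Finset.sum_nonneg fun i _ => mul_nonneg ?_ (sq_nonneg _))
    have := hl i
    have e : 2 * (1 + D / l i) / (l i + δ) - D / (l i * l i) =
        (2 * l i ^ 2 + D * (l i - δ)) / (l i ^ 2 * (l i + δ)) := by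
      field_simp; ring
    rw [e]
    have := mul_nonneg hD (sub_nonneg.2 (hall i))
    positivity
  · push Not at hall
    obtain ⟨k, hk⟩ := hall
    set s : Fin n → ℝ := fun i => if i = k then ε⁻¹ else ε with hs
    have hs0 : ∀ i, 0 < s i := fun i => by
      simp only [hs]; split_ifs <;> positivity
    have hpair : ∀ i j, (if i = j then D * x i ^ 2 / (l i * l i) else 0) - (B / 2) * (s i * x i ^ 2 + s j * x j ^ 2)
        ≤ D * (x i / l i) * (x j / l j) := by
      intro i j
      by_cases hij : i = j
      · subst hij
        have := (hs0 i).le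
        have : 0 ≤ (B / 2) * (s i * x i ^ 2 + s i * x i ^ 2) := by positivity
        have e : D * (x i / l i) * (x i / l i) = D * x i ^ 2 / (l i * l i) := by
          have := (hl i).ne'
          field_simp
        simp only [if_true]; linarith
      · simp only [if_neg hij]
        have hll : 0 < l i * l j := mul_pos (hl i) (hl j)
        set c := D / (l i * l j) with hc
        have hc0 : 0 ≤ c := by positivity
        have e : D * (x i / l i) * (x j / l j) = c * (x i * x j) := by
          have := (hl i).ne'
          have := (hl j).ne'
          rw [hc]; field_simp
        rw [e]
        have hcs : ∃ r, 0 ≤ r ∧ c ≤ B * r ∧ r ^ 2 ≤ s i * s j := by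
          by_cases hik : i = k
          · refine ⟨1, by norm_num, ?_, ?_⟩
            · rw [hc, div_le_iff₀ hll]; linarith [hD2 i j hij]
            · have hjk : j ≠ k := fun h => hij (hik.trans h.symm)
              simp only [hs, if_pos hik, if_neg hjk]
              rw [inv_mul_cancel₀ hε.ne']; norm_num
          by_cases hjk : j = k
          · refine ⟨1, by norm_num, ?_, ?_⟩
            · rw [hc, div_le_iff₀ hll]; linarith [hD2 i j hij]
            · simp only [hs, if_pos hjk, if_neg hik]
              rw [mul_inv_cancel₀ hε.ne']; norm_num
          · refine ⟨ε, hε.le, ?_, ?_⟩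
            · rw [hc, div_le_iff₀ hll]
              have h5 := hD3 i j k hij hik hjk
              have h6 : l k ≤ ε := by linarith
              calc D ≤ B * l i * l j * l k := h5
                _ ≤ B * l i * l j * ε := by
                  have := (hl i).le
                  have := (hl j).le
                  gcongr
                _ = _ := by ring
            · simp only [hs, if_neg hjk, if_neg hik]; nlinarith
        obtain ⟨r, hr, hcr, hrs⟩ := hcs
        have h7 : -(s i * x i ^ 2 + s j * x j ^ 2) / 2 ≤ r * (x i * x j) := by
          have ha : 0 ≤ s i * x i ^ 2 := mul_nonneg (hs0 i).le (sq_nonneg _)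
          have hb : 0 ≤ s j * x j ^ 2 := mul_nonneg (hs0 j).le (sq_nonneg _)
          have hsq : (2 * (r * (x i * x j))) ^ 2 ≤ (s i * x i ^ 2 + s j * x j ^ 2) ^ 2 := by
            have : r ^ 2 * (x i * x j) ^ 2 ≤ s i * s j * (x i * x j) ^ 2 :=
              mul_le_mul_of_nonneg_right hrs (sq_nonneg _)
            nlinarith [sq_nonneg (s i * x i ^ 2 - s j * x j ^ 2)]
          have := (abs_le_of_sq_le_sq' hsq (by linarith)).1
          linarith
        have h8 : -(s i * x i ^ 2 + s j * x j ^ 2) / 2 ≤ 0 := by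
          have ha : 0 ≤ s i * x i ^ 2 := mul_nonneg (hs0 i).le (sq_nonneg _)
          have hb : 0 ≤ s j * x j ^ 2 := mul_nonneg (hs0 j).le (sq_nonneg _)
          linarith
        by_cases hx : 0 ≤ x i * x j
        · have := mul_nonneg hc0 hx
          nlinarith
        · push Not at hx
          have h9 : B * r * (x i * x j) ≤ c * (x i * x j) := mul_le_mul_of_nonpos_right hcr hx.le
          nlinarith
    have hsum : ∑ i, D * x i ^ 2 / (l i * l i) - n * B * ∑ i, s i * x i ^ 2 ≤ D * (∑ i, x i / l i) ^ 2 := by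
      have hS := Finset.sum_le_sum (s := Finset.univ) fun i _ => Finset.sum_le_sum (s := Finset.univ) fun j _ => hpair i j
      have e1 : ∑ i, ∑ j, D * (x i / l i) * (x j / l j) = D * (∑ i, x i / l i) ^ 2 := by
        rw [sq, Finset.sum_mul_sum, Finset.mul_sum]
        refine Finset.sum_congr rfl fun i _ => ?_
        rw [Finset.mul_sum]
        exact Finset.sum_congr rfl fun j _ => by ring
      rw [e1] at hS
      refine le_trans (le_of_eq ?_) hS
      have e3 : ∑ i, ∑ j, (B / 2) * (s i * x i ^ 2 + s j * x j ^ 2) = n * B * ∑ i, s i * x i ^ 2 := by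
        have : ∀ i, ∑ j, (B / 2) * (s i * x i ^ 2 + s j * x j ^ 2) =
            (B / 2) * (n * (s i * x i ^ 2) + ∑ j, s j * x j ^ 2) := fun i => by
          rw [← Finset.mul_sum, Finset.sum_add_distrib, Finset.sum_const, Finset.card_univ,
            Fintype.card_fin, nsmul_eq_mul]
        simp_rw [this]
        rw [← Finset.mul_sum, Finset.sum_add_distrib, Finset.sum_const, Finset.card_univ,
            Fintype.card_fin, nsmul_eq_mul, ← Finset.mul_sum]
        ring
      rw [← e3, ← Finset.sum_sub_distrib]
      refine Finset.sum_congr rfl fun i _ => ?_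
      rw [Finset.sum_sub_distrib, Finset.sum_ite_eq]
      simp
    have hfin : 0 ≤ ∑ i, (2 * (1 + D / l i) / (l i + δ) - n * B * s i) * x i ^ 2 := by
      refine Finset.sum_nonneg fun i _ => mul_nonneg ?_ (sq_nonneg _)
      have hli := hl i
      have h5 : 2 / (l i + δ) ≤ 2 * (1 + D / l i) / (l i + δ) := by
        gcongr
        have : 0 ≤ D / l i := by positivity
        linarith
      have h6 : n * B * s i ≤ 2 / (l i + δ) := by
        rw [le_div_iff₀ (by positivity)]
        by_cases hik : i = k
        · subst hik
          simp only [hs, if_true]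
          have : n * B * ε⁻¹ * (l i + δ) ≤ n * B * ε⁻¹ * (2 * δ) := by gcongr; linarith
          have h7 : n * B * ε⁻¹ * (2 * δ) = 2 * (n * B * δ) / ε := by field_simp
          have h8 : 2 * (n * B * δ) / ε ≤ 2 := by rw [div_le_iff₀ hε]; linarith
          linarith
        · simp only [hs, if_neg hik]
          have h9 : l i + δ ≤ 3 := by linarith [hl2 i]
          have : n * B * ε * (l i + δ) ≤ (2/3) * 3 := by gcongr
          linarith
      linarith
    have e2 : ∑ i, (2 * (1 + D / l i) / (l i + δ) - D / (l i * l i)) * x i ^ 2 =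
        ∑ i, (2 * (1 + D / l i) / (l i + δ) - n * B * s i) * x i ^ 2 + n * B * ∑ i, s i * x i ^ 2
          - ∑ i, D * x i ^ 2 / (l i * l i) := by
      rw [Finset.mul_sum, ← Finset.sum_add_distrib, ← Finset.sum_sub_distrib]
      exact Finset.sum_congr rfl fun i _ => by ring
    rw [e2]; linarith

theorem scalar_key (n : ℕ) {B ε δ D : ℝ} (hB : 0 ≤ B) (hε : 0 < ε) (hδ : 0 < δ)
    (h1 : (n:ℝ) * B * ε ≤ 2 / 3) (h2 : δ ≤ ε) (h3 : n * B * δ ≤ ε) (h4 : δ ≤ 1) (h5 : 2 * δ * B ≤ 1)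
    (l : Fin n → ℝ) (H : Fin n → Fin n → ℝ) (hH : ∀ i j, H i j = H j i)
    (hl : ∀ i, 0 < l i) (hl2 : ∀ i, l i ≤ 2) (hD : 0 ≤ D)
    (hD2 : ∀ i j, i ≠ j → D ≤ B * l i * l j)
    (hD3 : ∀ i j k, i ≠ j → i ≠ k → j ≠ k → D ≤ B * l i * l j * l k) :
    0 ≤ D * (∑ i, H i i / l i) ^ 2 +
      ∑ i, ∑ j, (2 * (1 + D / l i) / (l j + δ) - D / (l i * l j)) * H i j ^ 2 := by
  have hd := diag_key n hB hε hδ h1 h2 h3 h4 l (fun i => H i i) hl hl2 hD hD2 hD3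
  refine hd.trans (add_le_add_right ?_ _)
  set W : Fin n → Fin n → ℝ := fun i j => 2 * (1 + D / l i) / (l j + δ) - D / (l i * l j) with hW
  have e1 : ∑ i, ∑ j, W i j * H i j ^ 2 = ∑ i, ∑ j, ((W i j + W j i) / 2) * H i j ^ 2 := by
    have : ∑ i, ∑ j, W i j * H i j ^ 2 = ∑ i, ∑ j, W j i * H i j ^ 2 := by
      rw [Finset.sum_comm]
      exact Finset.sum_congr rfl fun i _ => Finset.sum_congr rfl fun j _ => by rw [hH j i]
    have h2 : ∑ i, ∑ j, ((W i j + W j i) / 2) * H i j ^ 2 =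
        (∑ i, ∑ j, W i j * H i j ^ 2 + ∑ i, ∑ j, W j i * H i j ^ 2) / 2 := by
      rw [← Finset.sum_add_distrib, Finset.sum_div]
      refine Finset.sum_congr rfl fun i _ => ?_
      rw [← Finset.sum_add_distrib, Finset.sum_div]
      exact Finset.sum_congr rfl fun j _ => by ring
    rw [h2, ← this]; ring
  change ∑ i, W i i * H i i ^ 2 ≤ ∑ i, ∑ j, W i j * H i j ^ 2
  rw [e1]
  refine Finset.sum_le_sum fun i _ => ?_
  have : ∑ j, (if i = j then W i i * H i i ^ 2 else 0) ≤ ∑ j, ((W i j + W j i) / 2) * H i j ^ 2 := by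
    refine Finset.sum_le_sum fun j _ => ?_
    by_cases hij : i = j
    · subst hij; simp
    · simp only [if_neg hij]
      have := pair_coef hB hδ h5 (hl i) (hl j) hD (hD2 i j hij)
      exact mul_nonneg (by simp only [hW]; linarith) (sq_nonneg _)
  simpa using this

end PartP4b

section PartP4c

open scoped ContDiff Matrix
open MeasureTheory

theorem spec_psd {n : ℕ} {A : Matrix (Fin n) (Fin n) ℝ} (hA : A.PosSemidef) :
    ∃ (U : Matrix (Fin n) (Fin n) ℝ) (l : Fin n → ℝ), U * Uᵀ = 1 ∧ Uᵀ * U = 1 ∧ (∀ i, 0 ≤ l i) ∧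
      A = U * Matrix.diagonal l * Uᵀ := by
  have h := hA.1.spectral_theorem
  refine ⟨(hA.1.eigenvectorUnitary : Matrix (Fin n) (Fin n) ℝ), hA.1.eigenvalues, ?_, ?_, hA.eigenvalues_nonneg, ?_⟩
  · have := Unitary.coe_mul_star_self hA.1.eigenvectorUnitary
    rwa [Unitary.coe_star, Matrix.star_eq_conjTranspose, Matrix.conjTranspose_eq_transpose_of_trivial] at this
  · have := Unitary.coe_star_mul_self hA.1.eigenvectorUnitary
    rwa [Matrix.star_eq_conjTranspose, Matrix.conjTranspose_eq_transpose_of_trivial] at this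
  · rw [Unitary.conjStarAlgAut_apply, Matrix.star_eq_conjTranspose, Matrix.conjTranspose_eq_transpose_of_trivial] at h
    exact h

theorem conj_det {n : ℕ} {U : Matrix (Fin n) (Fin n) ℝ} (h : U * Uᵀ = 1) (X : Matrix (Fin n) (Fin n) ℝ) :
    (U * X * Uᵀ).det = X.det := by
  have : U.det * Uᵀ.det = 1 := by rw [← Matrix.det_mul, h, Matrix.det_one]
  rw [Matrix.det_mul, Matrix.det_mul]
  linear_combination X.det * this

theorem conj_trace {n : ℕ} {U : Matrix (Fin n) (Fin n) ℝ} (h : Uᵀ * U = 1) (X : Matrix (Fin n) (Fin n) ℝ) :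
    (U * X * Uᵀ).trace = X.trace := by
  rw [Matrix.trace_mul_comm, ← Matrix.mul_assoc, h, Matrix.one_mul]

theorem cj_inv {n : ℕ} {U : Matrix (Fin n) (Fin n) ℝ} (h : U * Uᵀ = 1) (h' : Uᵀ * U = 1) (l : Fin n → ℝ)
    (hl : ∀ i, l i ≠ 0) :
    (U * Matrix.diagonal l * Uᵀ)⁻¹ = U * Matrix.diagonal (fun i => (l i)⁻¹) * Uᵀ := by
  apply Matrix.inv_eq_right_inv
  calc _ = U * Matrix.diagonal l * (Uᵀ * U) * Matrix.diagonal (fun i => (l i)⁻¹) * Uᵀ := by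
        simp only [Matrix.mul_assoc]
    _ = U * (Matrix.diagonal l * Matrix.diagonal (fun i => (l i)⁻¹)) * Uᵀ := by
        rw [h', Matrix.mul_one, Matrix.mul_assoc U]
    _ = 1 := by
        rw [Matrix.diagonal_mul_diagonal]
        simp only [mul_inv_cancel₀ (hl _)]
        rw [Matrix.diagonal_one, Matrix.mul_one, h]

theorem conj_tr1 {n : ℕ} {U : Matrix (Fin n) (Fin n) ℝ} (d : Fin n → ℝ) (H : Matrix (Fin n) (Fin n) ℝ) :
    (U * Matrix.diagonal d * Uᵀ * H).trace = ∑ i, d i * (Uᵀ * H * U) i i := by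
  have : (U * Matrix.diagonal d * Uᵀ * H).trace = (Matrix.diagonal d * (Uᵀ * H * U)).trace := by
    rw [Matrix.mul_assoc, Matrix.mul_assoc, Matrix.trace_mul_comm]
    simp only [Matrix.mul_assoc]
  rw [this]
  simp [Matrix.trace, Matrix.diagonal_mul]

theorem conj_tr2 {n : ℕ} {U : Matrix (Fin n) (Fin n) ℝ} (d e : Fin n → ℝ) (H : Matrix (Fin n) (Fin n) ℝ) :
    (U * Matrix.diagonal d * Uᵀ * H * (U * Matrix.diagonal e * Uᵀ) * H).trace =
      ∑ i, ∑ j, d i * e j * (Uᵀ * H * U) i j * (Uᵀ * H * U) j i := by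
  have : (U * Matrix.diagonal d * Uᵀ * H * (U * Matrix.diagonal e * Uᵀ) * H).trace =
      ((Matrix.diagonal d * (Uᵀ * H * U)) * (Matrix.diagonal e * (Uᵀ * H * U))).trace := by
    simp only [Matrix.mul_assoc]
    rw [Matrix.trace_mul_comm]
    simp only [Matrix.mul_assoc]
  rw [this]
  simp only [Matrix.trace, Matrix.diag, Matrix.mul_apply (M := Matrix.diagonal d * (Uᵀ * H * U)), Matrix.diagonal_mul]
  exact Finset.sum_congr rfl fun i _ => Finset.sum_congr rfl fun j _ => by ring

theorem prod_le_pow {n : ℕ} (l : Fin n → ℝ) (hl : ∀ i, 0 < l i) (hl2 : ∀ i, l i ≤ 2) (s : Finset (Fin n)) :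
    ∏ i, l i ≤ 2 ^ n * ∏ i ∈ s, l i := by
  rw [← Finset.prod_mul_prod_compl s, mul_comm]
  refine mul_le_mul_of_nonneg_right ?_ (Finset.prod_nonneg fun i _ => (hl i).le)
  calc ∏ i ∈ sᶜ, l i ≤ ∏ i ∈ sᶜ, 2 := Finset.prod_le_prod (fun i _ => (hl i).le) fun i _ => hl2 i
    _ = 2 ^ (sᶜ).card := by simp
    _ ≤ 2 ^ n := by
      apply pow_le_pow_right₀ (by norm_num)
      simpa using Finset.card_le_univ sᶜ

theorem mat_key_pd (n : ℕ) {b B ε δ : ℝ} (hb : 0 ≤ b) (hBb : B = b * 2 ^ n) (hε : 0 < ε) (hδ : 0 < δ)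
    (h1 : (n:ℝ) * B * ε ≤ 2 / 3) (h2 : δ ≤ ε) (h3 : n * B * δ ≤ ε) (h4 : δ ≤ 1) (h5 : 2 * δ * B ≤ 1)
    (A H : Matrix (Fin n) (Fin n) ℝ) (hA : A.PosDef) (htr : A.trace ≤ 2) (hH : Hᵀ = H) :
    0 ≤ b * (Dj n A H * H).trace +
      2 * ((1 + b • A.adjugate) * H * (A + δ • (1 : Matrix (Fin n) (Fin n) ℝ))⁻¹ * H).trace := by
  have hdet := hA.det_pos
  obtain ⟨U, l, hU, hU', hl0, hAe⟩ := spec_psd hA.posSemidef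
  have hdl : A.det = ∏ i, l i := by rw [hAe, conj_det hU, Matrix.det_diagonal]
  have htl : A.trace = ∑ i, l i := by rw [hAe, conj_trace hU', Matrix.trace_diagonal]
  have hl : ∀ i, 0 < l i := fun i => by
    refine lt_of_le_of_ne (hl0 i) fun h => ?_
    rw [hdl, Finset.prod_eq_zero (Finset.mem_univ i) h.symm] at hdet
    exact lt_irrefl _ hdet
  have hl2 : ∀ i, l i ≤ 2 := fun i =>
    (Finset.single_le_sum (fun j _ => hl0 j) (Finset.mem_univ i)).trans (htl ▸ htr)
  have hB : 0 ≤ B := by rw [hBb]; positivity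
  set D := b * A.det with hD
  have hD0 : 0 ≤ D := by positivity
  have hinv : A⁻¹ = U * Matrix.diagonal (fun i => (l i)⁻¹) * Uᵀ := by
    conv_lhs => rw [hAe]
    exact cj_inv hU hU' l fun i => (hl i).ne'
  have hN : (A + δ • (1 : Matrix (Fin n) (Fin n) ℝ))⁻¹ = U * Matrix.diagonal (fun i => (l i + δ)⁻¹) * Uᵀ := by
    rw [← cj_inv hU hU' (fun i => l i + δ) fun i => by have := hl i; positivity]
    congr 1
    have : Matrix.diagonal (fun i => l i + δ) = Matrix.diagonal l + δ • (1 : Matrix (Fin n) (Fin n) ℝ) := by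
      rw [Matrix.smul_one_eq_diagonal, Matrix.diagonal_add]
    rw [this, Matrix.mul_add, Matrix.add_mul, ← hAe]
    simp [hU]
  have hadj : 1 + b • A.adjugate = U * Matrix.diagonal (fun i => 1 + D / l i) * Uᵀ := by
    have e : A.adjugate = A.det • A⁻¹ := by
      rw [Matrix.inv_def, smul_smul, Ring.mul_inverse_cancel _ hdet.ne'.isUnit, one_smul]
    have : Matrix.diagonal (fun i => 1 + D / l i) = (1 : Matrix (Fin n) (Fin n) ℝ) + D • Matrix.diagonal (fun i => (l i)⁻¹) := by
      rw [← Matrix.diagonal_one, ← Matrix.diagonal_smul, Matrix.diagonal_add]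
      congr 1
    rw [this, Matrix.mul_add, Matrix.add_mul, Matrix.mul_one, hU, e, smul_smul, hinv]
    simp [hD]
  set H' := Uᵀ * H * U with hH'
  have hs : ∀ i j, H' i j = H' j i := fun i j => by
    have : H'ᵀ = H' := by
      rw [hH']; simp [Matrix.transpose_mul, hH, Matrix.mul_assoc]
    exact congrFun (congrFun this j) i
  have key := scalar_key n (D := D) hB hε hδ h1 h2 h3 h4 h5 l (fun i j => H' i j) hs hl hl2 hD0
    (fun i j hij => by
      have := prod_le_pow l hl hl2 {i, j}
      rw [Finset.prod_pair hij] at this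
      rw [hD, hdl, hBb]
      nlinarith)
    (fun i j k hij hik hjk => by
      have := prod_le_pow l hl hl2 {i, j, k}
      rw [Finset.prod_insert (by simp [hij, hik]), Finset.prod_pair hjk] at this
      rw [hD, hdl, hBb]
      nlinarith)
  refine key.trans (le_of_eq ?_)
  rw [Dj_of_det n A H hdet.ne', hadj, hN, hinv, conj_tr2, Matrix.smul_mul, Matrix.trace_smul, Matrix.sub_mul,
    Matrix.trace_sub, Matrix.smul_mul, Matrix.trace_smul, conj_tr2, conj_tr1, smul_eq_mul, smul_eq_mul, ← mul_assoc, ← hD,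
    mul_sub, ← sq]
  have e1 : ∑ i, H' i i / l i = ∑ i, (l i)⁻¹ * H' i i := Finset.sum_congr rfl fun i _ => by ring
  rw [e1, sub_add, sub_eq_add_neg, ← hH']
  congr 1
  rw [neg_sub, Finset.mul_sum, Finset.mul_sum, ← Finset.sum_sub_distrib]
  refine Finset.sum_congr rfl fun i _ => ?_
  rw [Finset.mul_sum, Finset.mul_sum, ← Finset.sum_sub_distrib]
  refine Finset.sum_congr rfl fun j _ => ?_
  rw [hs j i]
  have h6 := (hl i).ne'
  have h7 := (hl j).ne'
  have h8 : l j + δ ≠ 0 := by have := hl j; positivity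
  field_simp

theorem mat_key (n : ℕ) {b : ℝ} (hb : 0 ≤ b) : ∃ δ : ℝ, 0 < δ ∧ ∀ A H : Matrix (Fin n) (Fin n) ℝ,
    A.PosSemidef → A.trace ≤ 1 → Hᵀ = H →
    0 ≤ b * (Dj n A H * H).trace +
      2 * ((1 + b • A.adjugate) * H * (A + δ • (1 : Matrix (Fin n) (Fin n) ℝ))⁻¹ * H).trace := by
  set B := b * 2 ^ n with hB
  have hB0 : 0 ≤ B := by positivity
  set Q := n * B + B + 1 with hQ
  have hn0 : (0:ℝ) ≤ n := by positivity
  have hnB : 0 ≤ n * B := by positivity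
  have hQ1 : 1 ≤ Q := by linarith
  have hQ0 : 0 < Q := by linarith
  refine ⟨1 / (2 * Q ^ 2), by positivity, fun A H hA htr hH => ?_⟩
  set δ := 1 / (2 * Q ^ 2) with hδd
  have hδ : 0 < δ := by positivity
  have hδQ : δ * Q = 1 / (2 * Q) := by rw [hδd]; field_simp
  have hεQ : 1 / (2 * Q) * Q = 1 / 2 := by field_simp
  have hε0 : 0 < 1 / (2 * Q) := by positivity
  set ε := 1 / (2 * Q) with hε
  have hpd : ∀ A : Matrix (Fin n) (Fin n) ℝ, A.PosDef → A.trace ≤ 2 →  0 ≤ b * (Dj n A H * H).trace +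
      2 * ((1 + b • A.adjugate) * H * (A + δ • (1 : Matrix (Fin n) (Fin n) ℝ))⁻¹ * H).trace := by
    intro A hA htr
    have hε1 : ε ≤ 1 / 2 := by nlinarith
    have hde : δ ≤ ε := by nlinarith
    refine mat_key_pd n hb hB (ε := ε) hε0 hδ ?_ hde ?_ (by linarith) ?_ A H hA htr hH
    · nlinarith
    · nlinarith
    · nlinarith
  have hlim : Filter.Tendsto (fun t : ℝ => (fun A : Matrix (Fin n) (Fin n) ℝ => b * (Dj n A H * H).trace +
      2 * ((1 + b • A.adjugate) * H * (A + δ • (1 : Matrix (Fin n) (Fin n) ℝ))⁻¹ * H).trace)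
        (A + t • (1 : Matrix (Fin n) (Fin n) ℝ)))
      (nhdsWithin 0 (Set.Ioi 0)) (nhds ((fun A : Matrix (Fin n) (Fin n) ℝ => b * (Dj n A H * H).trace +
      2 * ((1 + b • A.adjugate) * H * (A + δ • (1 : Matrix (Fin n) (Fin n) ℝ))⁻¹ * H).trace) A)) := by
    suffices hG : ContinuousAt (fun A : Matrix (Fin n) (Fin n) ℝ => b * (Dj n A H * H).trace +
      2 * ((1 + b • A.adjugate) * H * (A + δ • (1 : Matrix (Fin n) (Fin n) ℝ))⁻¹ * H).trace) A from
      hG.tendsto.comp (tendsto_add_smul A)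
    have hd : Continuous (fun A : Matrix (Fin n) (Fin n) ℝ => Dj n A H) :=
      continuous_matrix fun i j => Dj_continuous n H i j
    have hi : ContinuousAt (fun A : Matrix (Fin n) (Fin n) ℝ => (A + δ • (1 : Matrix (Fin n) (Fin n) ℝ))⁻¹) A := by
      simp_rw [Matrix.inv_def, Ring.inverse_eq_inv']
      have hadd : Continuous (fun A : Matrix (Fin n) (Fin n) ℝ => A + δ • (1 : Matrix (Fin n) (Fin n) ℝ)) := by
        fun_prop
      exact (hadd.matrix_det.continuousAt.inv₀ (posDef_add_smul hA hδ).det_pos.ne').smul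
        hadd.matrix_adjugate.continuousAt
    have hadj : Continuous (fun A : Matrix (Fin n) (Fin n) ℝ => 1 + b • A.adjugate) := by
      have := Continuous.matrix_adjugate (continuous_id (X := Matrix (Fin n) (Fin n) ℝ))
      exact continuous_const.add (this.const_smul b)
    refine ContinuousAt.add (continuousAt_const.mul (Continuous.continuousAt ?_)) (continuousAt_const.mul ?_)
    · exact (hd.matrix_mul continuous_const).matrix_trace
    · have htrc : Continuous (fun A : Matrix (Fin n) (Fin n) ℝ => A.trace) := continuous_id.matrix_trace
      refine htrc.continuousAt.comp ?_
      have h1 : ContinuousAt (fun A : Matrix (Fin n) (Fin n) ℝ => (1 + b • A.adjugate) * H) A :=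
        (hadj.matrix_mul continuous_const).continuousAt
      exact (h1.mul hi).mul continuousAt_const
  refine ge_of_tendsto hlim ?_
  have hev : ∀ᶠ t : ℝ in nhdsWithin 0 (Set.Ioi 0), t * n < 1 := by
    have : Filter.Tendsto (fun t : ℝ => t * n) (nhdsWithin 0 (Set.Ioi 0)) (nhds 0) := by
      have h : Continuous (fun t : ℝ => t * n) := by fun_prop
      have h2 := h.tendsto 0
      simp only [zero_mul] at h2
      exact h2.mono_left nhdsWithin_le_nhds
    exact this.eventually (gt_mem_nhds one_pos)
  filter_upwards [self_mem_nhdsWithin, hev] with t ht htn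
  refine hpd _ (posDef_add_smul hA ht) ?_
  rw [Matrix.trace_add, Matrix.trace_smul, Matrix.trace_one]
  simp
  linarith

end PartP4c

section PartP5

open scoped ContDiff Matrix
open MeasureTheory

/-- Hessian via partial derivatives -/
noncomputable def Mh {n : ℕ} (u : EuclideanSpace ℝ (Fin n) → ℝ) (x : EuclideanSpace ℝ (Fin n)) :
    Matrix (Fin n) (Fin n) ℝ := Matrix.of fun i j => pd i (pd j u) x

/-- entrywise derivative of a matrix valued function -/
noncomputable def mpd {n : ℕ} (k : Fin n) (F : EuclideanSpace ℝ (Fin n) → Matrix (Fin n) (Fin n) ℝ)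
    (x : EuclideanSpace ℝ (Fin n)) : Matrix (Fin n) (Fin n) ℝ :=
  Matrix.of fun i j => pd k (fun y => F y i j) x

/-- matrix valued smooth function -/
def MS {n : ℕ} (F : EuclideanSpace ℝ (Fin n) → Matrix (Fin n) (Fin n) ℝ) : Prop :=
  ∀ i j, ContDiff ℝ ∞ (fun y => F y i j)

theorem MS.mpd {n : ℕ} {F : EuclideanSpace ℝ (Fin n) → Matrix (Fin n) (Fin n) ℝ} (hF : MS F) (k : Fin n) :
    MS (mpd k F) := fun i j => contDiff_pd k (hF i j)

theorem MS.mul {n : ℕ} {F G : EuclideanSpace ℝ (Fin n) → Matrix (Fin n) (Fin n) ℝ} (hF : MS F) (hG : MS G) :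
    MS (fun x => F x * G x) := fun i j => by
  simp only [Matrix.mul_apply]
  exact ContDiff.sum fun k _ => (hF i k).mul (hG k j)

theorem MS.neg {n : ℕ} {F : EuclideanSpace ℝ (Fin n) → Matrix (Fin n) (Fin n) ℝ} (hF : MS F) :
    MS (fun x => - F x) := fun i j => (hF i j).neg

theorem mpd_mul {n : ℕ} (k : Fin n) {F G : EuclideanSpace ℝ (Fin n) → Matrix (Fin n) (Fin n) ℝ} (hF : MS F)
    (hG : MS G) (x : EuclideanSpace ℝ (Fin n)) :
    mpd k (fun x => F x * G x) x = mpd k F x * G x + F x * mpd k G x := by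
  ext i j
  simp only [mpd, Matrix.of_apply, Matrix.mul_apply, Matrix.add_apply]
  rw [pd_sum _ k (fun r => (hF i r).mul (hG r j)), ← Finset.sum_add_distrib]
  exact Finset.sum_congr rfl fun r _ => pd_mul k (hF i r) (hG r j) x

theorem mpd_neg {n : ℕ} (k : Fin n) {F : EuclideanSpace ℝ (Fin n) → Matrix (Fin n) (Fin n) ℝ}
    (x : EuclideanSpace ℝ (Fin n)) :
    mpd k (fun x => - F x) x = - mpd k F x := by
  ext i j
  simp only [mpd, Matrix.of_apply, Matrix.neg_apply]
  exact pd_neg k x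

theorem pd_chain {n : ℕ} (k : Fin n) {G : (Fin n → Fin n → ℝ) → ℝ} (hG : ContDiff ℝ ∞ G)
    {F : EuclideanSpace ℝ (Fin n) → Matrix (Fin n) (Fin n) ℝ} (hF : MS F) (x : EuclideanSpace ℝ (Fin n)) :
    pd k (fun y => G (fun p q => F y p q)) x = fderiv ℝ G (fun p q => F x p q) (fun p q => mpd k F x p q) := by
  have hF' : HasFDerivAt (fun y => (fun p q => F y p q : Fin n → Fin n → ℝ))
      (ContinuousLinearMap.pi fun p => ContinuousLinearMap.pi fun q => fderiv ℝ (fun y => F y p q) x) x := by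
    rw [hasFDerivAt_pi]; intro p
    rw [hasFDerivAt_pi]; intro q
    exact (cd_diff (hF p q) x).hasFDerivAt
  have hG' := (hG.differentiable (by simp) (fun p q => F x p q)).hasFDerivAt
  have := (hG'.comp x hF').fderiv
  unfold pd
  change (fderiv ℝ (G ∘ fun y => (fun p q => F y p q : Fin n → Fin n → ℝ)) x) _ = _
  rw [this]
  rfl

theorem MS_Mh {n : ℕ} {u : EuclideanSpace ℝ (Fin n) → ℝ} (hu : ContDiff ℝ ∞ u) : MS (Mh u) :=
  fun i j => contDiff_pd i (contDiff_pd j hu)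

theorem pd_comm' {n : ℕ} (i j : Fin n) {f : EuclideanSpace ℝ (Fin n) → ℝ} (hf : ContDiff ℝ ∞ f) :
    pd i (pd j f) = pd j (pd i f) := funext fun x => pd_comm i j hf x

theorem Mh_symm {n : ℕ} {u : EuclideanSpace ℝ (Fin n) → ℝ} (hu : ContDiff ℝ ∞ u) (x) : (Mh u x)ᵀ = Mh u x := by
  ext i j; exact pd_comm j i hu x

theorem T_symm1 {n : ℕ} {u : EuclideanSpace ℝ (Fin n) → ℝ} (hu : ContDiff ℝ ∞ u) (x) (i p q : Fin n) :
    mpd i (Mh u) x p q = mpd i (Mh u) x q p := by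
  change pd i (pd p (pd q u)) x = pd i (pd q (pd p u)) x
  rw [pd_comm' p q hu]

theorem T_symm2 {n : ℕ} {u : EuclideanSpace ℝ (Fin n) → ℝ} (hu : ContDiff ℝ ∞ u) (x) (i p q : Fin n) :
    mpd i (Mh u) x p q = mpd p (Mh u) x i q := by
  change pd i (pd p (pd q u)) x = pd p (pd i (pd q u)) x
  rw [pd_comm' p i (contDiff_pd q hu)]

theorem T_symm4 {n : ℕ} {u : EuclideanSpace ℝ (Fin n) → ℝ} (hu : ContDiff ℝ ∞ u) (x) (i j p q : Fin n) :
    mpd i (mpd j (Mh u)) x p q = mpd p (mpd q (Mh u)) x i j := by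
  change pd i (pd j (pd p (pd q u))) x = pd p (pd q (pd i (pd j u))) x
  rw [pd_comm' j p (contDiff_pd q hu), pd_comm' j q hu, pd_comm' i p (contDiff_pd q (contDiff_pd j hu)),
    pd_comm' i q (contDiff_pd j hu)]

/-- coefficient matrix -/
noncomputable def aco {n : ℕ} (b : ℝ) (u : EuclideanSpace ℝ (Fin n) → ℝ) (x : EuclideanSpace ℝ (Fin n)) :
    Matrix (Fin n) (Fin n) ℝ := 1 + b • (Mh u x).adjugate

theorem MS_aco {n : ℕ} (b : ℝ) {u : EuclideanSpace ℝ (Fin n) → ℝ} (hu : ContDiff ℝ ∞ u) : MS (aco b u) := by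
  intro i j
  have h1 : ContDiff ℝ ∞ (fun y => aj n i j (fun p q => Mh u y p q)) :=
    (contDiff_aj n i j).comp (contDiff_pi.2 fun p => contDiff_pi.2 fun q => MS_Mh hu p q)
  exact contDiff_const.add (contDiff_const.mul h1)

theorem aco_symm {n : ℕ} (b : ℝ) {u : EuclideanSpace ℝ (Fin n) → ℝ} (hu : ContDiff ℝ ∞ u) (x) :
    (aco b u x)ᵀ = aco b u x := by
  simp only [aco, Matrix.transpose_add, Matrix.transpose_smul, Matrix.transpose_one, Matrix.adjugate_transpose, Mh_symm hu]

theorem mpd_aco {n : ℕ} (b : ℝ) {u : EuclideanSpace ℝ (Fin n) → ℝ} (hu : ContDiff ℝ ∞ u) (k : Fin n) (x) :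
    mpd k (aco b u) x = b • Dj n (Mh u x) (mpd k (Mh u) x) := by
  ext i j
  have h1 : ContDiff ℝ ∞ (fun y => aj n i j (fun p q => Mh u y p q)) :=
    (contDiff_aj n i j).comp (contDiff_pi.2 fun p => contDiff_pi.2 fun q => MS_Mh hu p q)
  have h2 := pd_chain k (contDiff_aj n i j) (MS_Mh hu) x
  change pd k (fun y => (1 : Matrix (Fin n) (Fin n) ℝ) i j + b * aj n i j (fun p q => Mh u y p q)) x = _
  rw [pd_add k contDiff_const (contDiff_const.mul h1), pd_mul k contDiff_const h1, pd_const, pd_const, h2]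
  simp [Dj]

theorem eq_diff1 {n : ℕ} {b : ℝ} {u : EuclideanSpace ℝ (Fin n) → ℝ} (hu : ContDiff ℝ ∞ u)
    (heq : ∀ x, (Mh u x).trace + b * (Mh u x).det = 1) (q : Fin n) (x) :
    ∑ i, ∑ j, aco b u x i j * mpd q (Mh u) x i j = 0 := by
  have h1 : ContDiff ℝ ∞ (fun y => dt n (fun p q => Mh u y p q)) :=
    (contDiff_dt n).comp (contDiff_pi.2 fun p => contDiff_pi.2 fun q => MS_Mh hu p q)
  have h2 := pd_chain q (contDiff_dt n) (MS_Mh hu) x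
  have h3 : ContDiff ℝ ∞ (fun y => ∑ i, Mh u y i i) := ContDiff.sum fun i _ => MS_Mh hu i i
  have h4 : (fun y => (∑ i, Mh u y i i) + b * dt n (fun p q => Mh u y p q)) = fun _ => 1 := funext heq
  have h5 : pd q (fun y => (∑ i, Mh u y i i) + b * dt n (fun p q => Mh u y p q)) x = 0 := by
    rw [h4, pd_const]
  rw [pd_add q h3 (contDiff_const.mul h1), pd_mul q contDiff_const h1, pd_const, h2, fderiv_dt,
    pd_sum _ q (fun i => MS_Mh hu i i)] at h5
  have hadj : ∀ i j, (Mh u x).adjugate i j = (Mh u x).adjugate j i := fun i j => by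
    have : (Mh u x).adjugateᵀ = (Mh u x).adjugate := by rw [Matrix.adjugate_transpose, Mh_symm hu]
    exact congrFun (congrFun this j) i
  rw [← h5]
  simp only [aco, Matrix.add_apply, Matrix.smul_apply, smul_eq_mul, add_mul, Finset.sum_add_distrib, zero_mul, zero_add]
  congr 1
  · refine Finset.sum_congr rfl fun i _ => ?_
    simp [Matrix.one_apply, mpd]
  · rw [Finset.mul_sum]
    refine Finset.sum_congr rfl fun i _ => ?_
    rw [Finset.mul_sum]
    refine Finset.sum_congr rfl fun j _ => ?_
    rw [hadj i j, mul_assoc]; rfl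

theorem eq_diff2 {n : ℕ} {b : ℝ} {u : EuclideanSpace ℝ (Fin n) → ℝ} (hu : ContDiff ℝ ∞ u)
    (heq : ∀ x, (Mh u x).trace + b * (Mh u x).det = 1) (p q : Fin n) (x) :
    ∑ i, ∑ j, aco b u x i j * mpd p (mpd q (Mh u)) x i j =
      - (b * ∑ i, ∑ j, Dj n (Mh u x) (mpd p (Mh u) x) i j * mpd q (Mh u) x i j) := by
  have hT := (MS_Mh hu).mpd q
  have hA := MS_aco b hu
  have h0 : pd p (fun y => ∑ i, ∑ j, aco b u y i j * mpd q (Mh u) y i j) x = 0 := by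
    rw [funext (eq_diff1 hu heq q), pd_const]
  rw [pd_sum _ p (fun i => ContDiff.sum fun j _ => (hA i j).mul (hT i j))] at h0
  have h1 : ∀ i, pd p (fun y => ∑ j, aco b u y i j * mpd q (Mh u) y i j) x =
      ∑ j, (b * (Dj n (Mh u x) (mpd p (Mh u) x) i j * mpd q (Mh u) x i j)
        + aco b u x i j * mpd p (mpd q (Mh u)) x i j) := fun i => by
    rw [pd_sum _ p (fun j => (hA i j).mul (hT i j))]
    refine Finset.sum_congr rfl fun j _ => ?_
    rw [pd_mul p (hA i j) (hT i j)]
    have := congrFun (congrFun (mpd_aco b hu p x) i) j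
    simp only [mpd, Matrix.of_apply, Matrix.smul_apply, smul_eq_mul] at this ⊢
    rw [this]; ring
  simp only [h1, Finset.sum_add_distrib, ← Finset.mul_sum] at h0
  linarith

/-- resolvent -/
noncomputable def Nr {n : ℕ} (δ : ℝ) (u : EuclideanSpace ℝ (Fin n) → ℝ) (x : EuclideanSpace ℝ (Fin n)) :
    Matrix (Fin n) (Fin n) ℝ := (Mh u x + δ • (1 : Matrix (Fin n) (Fin n) ℝ))⁻¹

theorem MS_shift {n : ℕ} (δ : ℝ) {u : EuclideanSpace ℝ (Fin n) → ℝ} (hu : ContDiff ℝ ∞ u) :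
    MS (fun x => Mh u x + δ • (1 : Matrix (Fin n) (Fin n) ℝ)) :=
  fun i j => (MS_Mh hu i j).add contDiff_const

theorem MS_Nr {n : ℕ} {δ : ℝ} (hδ : 0 < δ) {u : EuclideanSpace ℝ (Fin n) → ℝ} (hu : ContDiff ℝ ∞ u)
    (hps : ∀ x, (Mh u x).PosSemidef) : MS (Nr δ u) := by
  intro i j
  have hs : ContDiff ℝ ∞ (fun y => (fun p q => (Mh u y + δ • (1 : Matrix (Fin n) (Fin n) ℝ)) p q : Fin n → Fin n → ℝ)) :=
    contDiff_pi.2 fun p => contDiff_pi.2 fun q => MS_shift δ hu p q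
  have h1 : ContDiff ℝ ∞ (fun y => aj n i j (fun p q => (Mh u y + δ • (1 : Matrix (Fin n) (Fin n) ℝ)) p q)) :=
    (contDiff_aj n i j).comp hs
  have h2 : ContDiff ℝ ∞ (fun y => dt n (fun p q => (Mh u y + δ • (1 : Matrix (Fin n) (Fin n) ℝ)) p q)) :=
    (contDiff_dt n).comp hs
  have : (fun y => Nr δ u y i j) = fun y => (dt n (fun p q => (Mh u y + δ • (1 : Matrix (Fin n) (Fin n) ℝ)) p q))⁻¹
      * aj n i j (fun p q => (Mh u y + δ • (1 : Matrix (Fin n) (Fin n) ℝ)) p q) := by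
    ext y
    rw [Nr, Matrix.inv_def, Ring.inverse_eq_inv']
    rfl
  rw [this]
  exact (h2.inv fun y => (posDef_add_smul (hps y) hδ).det_pos.ne').mul h1

theorem mpd_Nr {n : ℕ} {δ : ℝ} (hδ : 0 < δ) {u : EuclideanSpace ℝ (Fin n) → ℝ} (hu : ContDiff ℝ ∞ u)
    (hps : ∀ x, (Mh u x).PosSemidef) (k : Fin n) :
    mpd k (Nr δ u) = fun x => -(Nr δ u x * mpd k (Mh u) x * Nr δ u x) := by
  funext x
  have hun : ∀ y, IsUnit (Mh u y + δ • (1 : Matrix (Fin n) (Fin n) ℝ)).det := fun y =>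
    (posDef_add_smul (hps y) hδ).det_pos.ne'.isUnit
  have h0 : (fun y => Nr δ u y * (Mh u y + δ • (1 : Matrix (Fin n) (Fin n) ℝ))) = fun _ => 1 := by
    funext y
    exact Matrix.nonsing_inv_mul _ (hun y)
  have h1 := mpd_mul k (MS_Nr hδ hu hps) (MS_shift δ hu) x
  have hs : mpd k (fun x => Mh u x + δ • (1 : Matrix (Fin n) (Fin n) ℝ)) x = mpd k (Mh u) x := by
    ext i j
    change pd k (fun y => Mh u y i j + (δ • (1 : Matrix (Fin n) (Fin n) ℝ)) i j) x = _
    rw [pd_add k (MS_Mh hu i j) contDiff_const, pd_const, add_zero]; rfl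
  have hz : mpd k (fun _ : EuclideanSpace ℝ (Fin n) => (1 : Matrix (Fin n) (Fin n) ℝ)) x = 0 := by
    ext i j; exact pd_const k _ x
  rw [h0, hz, hs] at h1
  have h2 : mpd k (Nr δ u) x * (Mh u x + δ • (1 : Matrix (Fin n) (Fin n) ℝ)) = - (Nr δ u x * mpd k (Mh u) x) :=
    eq_neg_of_add_eq_zero_left h1.symm
  calc mpd k (Nr δ u) x = mpd k (Nr δ u) x * (Mh u x + δ • (1 : Matrix (Fin n) (Fin n) ℝ)) * Nr δ u x := by
        rw [Matrix.mul_assoc, Nr, Matrix.mul_nonsing_inv _ (hun x), Matrix.mul_one]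
    _ = _ := by rw [h2, Matrix.neg_mul]

theorem mpd2_Nr {n : ℕ} {δ : ℝ} (hδ : 0 < δ) {u : EuclideanSpace ℝ (Fin n) → ℝ} (hu : ContDiff ℝ ∞ u)
    (hps : ∀ x, (Mh u x).PosSemidef) (i j : Fin n) (x) :
    mpd i (mpd j (Nr δ u)) x =
      Nr δ u x * mpd i (Mh u) x * Nr δ u x * mpd j (Mh u) x * Nr δ u x
      + Nr δ u x * mpd j (Mh u) x * Nr δ u x * mpd i (Mh u) x * Nr δ u x
      - Nr δ u x * mpd i (mpd j (Mh u)) x * Nr δ u x := by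
  have hN := MS_Nr hδ hu hps
  have hT := (MS_Mh hu).mpd j
  rw [mpd_Nr hδ hu hps j, mpd_neg, mpd_mul i (hN.mul hT) hN, mpd_mul i hN hT, mpd_Nr hδ hu hps i]
  simp only [Matrix.add_mul, Matrix.neg_mul, Matrix.mul_neg, Matrix.mul_assoc]
  abel

end PartP5

section PartP5b

open scoped ContDiff Matrix
open MeasureTheory

/-- quadratic form of the resolvent -/
noncomputable def wq {n : ℕ} (δ : ℝ) (u : EuclideanSpace ℝ (Fin n) → ℝ) (e : Fin n → ℝ)
    (x : EuclideanSpace ℝ (Fin n)) : ℝ := e ⬝ᵥ (Nr δ u x *ᵥ e)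

theorem contDiff_quad {n : ℕ} {F : EuclideanSpace ℝ (Fin n) → Matrix (Fin n) (Fin n) ℝ} (hF : MS F) (e : Fin n → ℝ) :
    ContDiff ℝ ∞ (fun y => e ⬝ᵥ (F y *ᵥ e)) := by
  simp only [dotProduct, Matrix.mulVec]
  exact ContDiff.sum fun i _ => contDiff_const.mul (ContDiff.sum fun j _ => (hF i j).mul contDiff_const)

theorem pd_quad {n : ℕ} {F : EuclideanSpace ℝ (Fin n) → Matrix (Fin n) (Fin n) ℝ} (hF : MS F) (e : Fin n → ℝ)
    (k : Fin n) : pd k (fun y => e ⬝ᵥ (F y *ᵥ e)) = fun x => e ⬝ᵥ (mpd k F x *ᵥ e) := by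
  funext x
  simp only [dotProduct, Matrix.mulVec]
  have h1 : ∀ i, ContDiff ℝ ∞ (fun y => ∑ j, F y i j * e j) := fun i =>
    ContDiff.sum fun j _ => (hF i j).mul contDiff_const
  rw [pd_sum _ k (fun i => contDiff_const.mul (h1 i))]
  refine Finset.sum_congr rfl fun i _ => ?_
  rw [pd_mul k contDiff_const (h1 i), pd_const, pd_sum _ k (fun j => (hF i j).mul contDiff_const), zero_mul, zero_add]
  congr 1
  refine Finset.sum_congr rfl fun j _ => ?_
  rw [pd_mul k (hF i j) contDiff_const, pd_const, mul_zero, add_zero]; rfl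

theorem Nr_symm {n : ℕ} (δ : ℝ) {u : EuclideanSpace ℝ (Fin n) → ℝ} (hu : ContDiff ℝ ∞ u) (x) :
    (Nr δ u x)ᵀ = Nr δ u x := by
  rw [Nr, Matrix.transpose_nonsing_inv, Matrix.transpose_add, Mh_symm hu]; simp

theorem quad_alg {n : ℕ} (N T S : Matrix (Fin n) (Fin n) ℝ) (hN : Nᵀ = N) (hT : Tᵀ = T) (e : Fin n → ℝ) :
    e ⬝ᵥ ((N * T * N * S * N) *ᵥ e) = (T *ᵥ (N *ᵥ e)) ⬝ᵥ (N *ᵥ (S *ᵥ (N *ᵥ e))) := by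
  simp only [← Matrix.mulVec_mulVec]
  rw [Matrix.dotProduct_mulVec, ← Matrix.mulVec_transpose, hN, Matrix.dotProduct_mulVec, ← Matrix.mulVec_transpose, hT]

theorem sum4_swap {n : ℕ} (f : Fin n → Fin n → Fin n → Fin n → ℝ) :
    ∑ i, ∑ j, ∑ p, ∑ q, f i j p q = ∑ p, ∑ q, ∑ i, ∑ j, f i j p q := by
  have h := Finset.sum_comm (s := (Finset.univ : Finset (Fin n × Fin n))) (t := (Finset.univ : Finset (Fin n × Fin n)))
    (f := fun x y => f x.1 x.2 y.1 y.2)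
  simpa only [Fintype.sum_prod_type] using h

theorem Lop_wq {n : ℕ} {b δ : ℝ} (hδ : 0 < δ) {u : EuclideanSpace ℝ (Fin n) → ℝ} (hu : ContDiff ℝ ∞ u)
    (hps : ∀ x, (Mh u x).PosSemidef) (heq : ∀ x, (Mh u x).trace + b * (Mh u x).det = 1) (e : Fin n → ℝ) (x) :
    ∃ H : Matrix (Fin n) (Fin n) ℝ, Hᵀ = H ∧
    Lop (aco b u) (wq δ u e) x = b * (Dj n (Mh u x) H * H).trace +
      2 * (aco b u x * H * Nr δ u x * H).trace := by
  have hNs := Nr_symm δ hu x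
  have hN := MS_Nr hδ hu hps
  set v := Nr δ u x *ᵥ e with hv
  set H : Matrix (Fin n) (Fin n) ℝ := ∑ p, v p • mpd p (Mh u) x with hH
  have hHij : ∀ i j, H i j = ∑ p, v p * mpd p (Mh u) x i j := fun i j => by
    rw [hH, Matrix.sum_apply]; rfl
  have hHs : ∀ i j, H i j = H j i := fun i j => by
    rw [hHij, hHij]; exact Finset.sum_congr rfl fun p _ => by rw [T_symm1 hu]
  have hHt : Hᵀ = H := by ext i j; exact hHs j i
  refine ⟨H, hHt, ?_⟩
  have hTv : ∀ j, mpd j (Mh u) x *ᵥ v = fun s => H s j := fun j => by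
    funext s
    rw [hHij]
    simp only [Matrix.mulVec, dotProduct]
    refine Finset.sum_congr rfl fun p _ => ?_
    rw [T_symm1 hu x j s p, T_symm2 hu x j p s, T_symm1 hu x p j s, mul_comm]
  have hTt : ∀ j, (mpd j (Mh u) x)ᵀ = mpd j (Mh u) x := fun j => by
    ext p q; exact T_symm1 hu x j q p
  set K := H * Nr δ u x * H with hK
  have hKs : ∀ i j, K i j = K j i := fun i j => by
    have : Kᵀ = K := by rw [hK]; simp only [Matrix.transpose_mul, hHt, hNs, Matrix.mul_assoc]
    exact congrFun (congrFun this j) i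
  have hq : ∀ i j, e ⬝ᵥ ((Nr δ u x * mpd i (Mh u) x * Nr δ u x * mpd j (Mh u) x * Nr δ u x) *ᵥ e) = K i j := by
    intro i j
    rw [quad_alg _ _ _ hNs (hTt i), ← hv, hTv, hTv]
    rw [hK, Matrix.mul_assoc, Matrix.mul_apply]
    simp only [dotProduct, Matrix.mulVec, Matrix.mul_apply]
    exact Finset.sum_congr rfl fun s _ => by rw [hHs s i]
  have h2 : ∀ i j, pd i (pd j (wq δ u e)) x = 2 * K i j - ∑ p, ∑ q, v p * v q * mpd p (mpd q (Mh u)) x i j := by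
    intro i j
    have e1 : pd i (pd j (wq δ u e)) x = e ⬝ᵥ (mpd i (mpd j (Nr δ u)) x *ᵥ e) := by
      have := pd_quad hN e j
      change pd j (wq δ u e) = _ at this
      rw [this, pd_quad (hN.mpd j) e i]
    rw [e1, mpd2_Nr hδ hu hps, Matrix.sub_mulVec, Matrix.add_mulVec, dotProduct_sub, dotProduct_add, hq, hq, hKs j i,
      two_mul]
    congr 1
    rw [← Matrix.mulVec_mulVec, ← hv, ← Matrix.mulVec_mulVec, Matrix.dotProduct_mulVec, ← Matrix.mulVec_transpose, hNs, ← hv]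
    simp only [dotProduct, Matrix.mulVec, Finset.mul_sum]
    refine Finset.sum_congr rfl fun p _ => Finset.sum_congr rfl fun q _ => ?_
    rw [T_symm4 hu x i j p q]; ring
  have h3 : ∑ i, ∑ j, aco b u x i j * ∑ p, ∑ q, v p * v q * mpd p (mpd q (Mh u)) x i j =
      - (b * ∑ i, ∑ j, Dj n (Mh u x) H i j * H i j) := by
    calc _ = ∑ p, ∑ q, v p * v q * ∑ i, ∑ j, aco b u x i j * mpd p (mpd q (Mh u)) x i j := by
          simp only [Finset.mul_sum]
          rw [sum4_swap]
          refine Finset.sum_congr rfl fun p _ => Finset.sum_congr rfl fun q _ =>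
            Finset.sum_congr rfl fun i _ => Finset.sum_congr rfl fun j _ => ?_
          ring
      _ = ∑ p, ∑ q, v p * v q * (- (b * ∑ i, ∑ j, Dj n (Mh u x) (mpd p (Mh u) x) i j * mpd q (Mh u) x i j)) := by
          simp only [eq_diff2 hu heq]
      _ = _ := by
          simp only [hH, Dj_sum_smul, Matrix.sum_apply, Matrix.smul_apply, smul_eq_mul, Finset.sum_mul_sum]
          simp only [Finset.mul_sum, ← Finset.sum_neg_distrib]
          rw [sum4_swap]
          refine Finset.sum_congr rfl fun p _ => Finset.sum_congr rfl fun q _ =>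
            Finset.sum_congr rfl fun i _ => Finset.sum_congr rfl fun j _ => ?_
          ring
  have hlhs : Lop (aco b u) (wq δ u e) x = 2 * ∑ i, ∑ j, aco b u x i j * K i j -
      ∑ i, ∑ j, aco b u x i j * ∑ p, ∑ q, v p * v q * mpd p (mpd q (Mh u)) x i j := by
    rw [Lop, Finset.mul_sum, ← Finset.sum_sub_distrib]
    refine Finset.sum_congr rfl fun i _ => ?_
    rw [Finset.mul_sum, ← Finset.sum_sub_distrib]
    refine Finset.sum_congr rfl fun j _ => ?_
    rw [h2]; ring
  rw [hlhs, h3]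
  have t1 : (Dj n (Mh u x) H * H).trace = ∑ i, ∑ j, Dj n (Mh u x) H i j * H i j := by
    simp only [Matrix.trace, Matrix.diag, Matrix.mul_apply]
    exact Finset.sum_congr rfl fun i _ => Finset.sum_congr rfl fun j _ => by rw [hHs j i]
  have t2 : (aco b u x * H * Nr δ u x * H).trace = ∑ i, ∑ j, aco b u x i j * K i j := by
    have : aco b u x * H * Nr δ u x * H = aco b u x * K := by rw [hK]; simp only [Matrix.mul_assoc]
    rw [this]
    simp only [Matrix.trace, Matrix.diag, Matrix.mul_apply]
    exact Finset.sum_congr rfl fun i _ => Finset.sum_congr rfl fun j _ => by rw [hKs j i]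
  rw [t1, t2]; ring

theorem Lop_wq_nonneg {n : ℕ} {b : ℝ} (hb : 0 ≤ b) : ∃ δ : ℝ, 0 < δ ∧ ∀ {u : EuclideanSpace ℝ (Fin n) → ℝ}, ContDiff ℝ ∞ u →
    (∀ x, (Mh u x).PosSemidef) → (∀ x, (Mh u x).trace + b * (Mh u x).det = 1) → ∀ (e : Fin n → ℝ) (x),
    0 ≤ Lop (aco b u) (wq δ u e) x := by
  obtain ⟨δ, hδ, hk⟩ := mat_key n hb
  refine ⟨δ, hδ, fun {u} hu hps heq e x => ?_⟩
  obtain ⟨H, hHs, hL⟩ := Lop_wq hδ hu hps heq e x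
  rw [hL]
  refine hk _ H (hps x) ?_ hHs
  have := mul_nonneg hb (hps x).det_nonneg
  linarith [heq x]

theorem Bf_eq {n : ℕ} (A : Matrix (Fin n) (Fin n) ℝ) (p : Fin n → ℝ) : Bf A p p = p ⬝ᵥ (A *ᵥ p) := by
  simp only [Bf, dotProduct, Matrix.mulVec, Finset.mul_sum]
  exact Finset.sum_congr rfl fun i _ => Finset.sum_congr rfl fun j _ => by ring

theorem adj_bounds_pd {n : ℕ} {A : Matrix (Fin n) (Fin n) ℝ} (hA : A.PosDef) (htr : A.trace ≤ 2) (p : Fin n → ℝ) :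
    0 ≤ p ⬝ᵥ (A.adjugate *ᵥ p) ∧ p ⬝ᵥ (A.adjugate *ᵥ p) ≤ 2 ^ n * ∑ i, p i ^ 2 := by
  have hdet := hA.det_pos
  obtain ⟨U, l, hU, hU', hl0, hAe⟩ := spec_psd hA.posSemidef
  have hdl : A.det = ∏ i, l i := by rw [hAe, conj_det hU, Matrix.det_diagonal]
  have htl : A.trace = ∑ i, l i := by rw [hAe, conj_trace hU', Matrix.trace_diagonal]
  have hl : ∀ i, 0 < l i := fun i => by
    refine lt_of_le_of_ne (hl0 i) fun h => ?_
    rw [hdl, Finset.prod_eq_zero (Finset.mem_univ i) h.symm] at hdet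
    exact lt_irrefl _ hdet
  have hl2 : ∀ i, l i ≤ 2 := fun i =>
    (Finset.single_le_sum (fun j _ => hl0 j) (Finset.mem_univ i)).trans (htl ▸ htr)
  have hinv : A⁻¹ = U * Matrix.diagonal (fun i => (l i)⁻¹) * Uᵀ := by
    conv_lhs => rw [hAe]
    exact cj_inv hU hU' l fun i => (hl i).ne'
  have e : A.adjugate = A.det • A⁻¹ := by
    rw [Matrix.inv_def, smul_smul, Ring.mul_inverse_cancel _ hdet.ne'.isUnit, one_smul]
  set z := Uᵀ *ᵥ p with hz
  have e2 : p ⬝ᵥ (A.adjugate *ᵥ p) = ∑ i, A.det / l i * z i ^ 2 := by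
    rw [e, hinv, Matrix.smul_mulVec, dotProduct_smul, ← Matrix.mulVec_mulVec, ← Matrix.mulVec_mulVec, ← hz,
      Matrix.dotProduct_mulVec, ← Matrix.mulVec_transpose, ← hz, smul_eq_mul]
    simp only [dotProduct, Matrix.mulVec_diagonal, Finset.mul_sum]
    exact Finset.sum_congr rfl fun i _ => by ring
  have e3 : ∑ i, z i ^ 2 = ∑ i, p i ^ 2 := by
    have : z ⬝ᵥ z = p ⬝ᵥ p := by
      rw [hz, Matrix.dotProduct_mulVec, ← Matrix.mulVec_transpose, Matrix.transpose_transpose, Matrix.mulVec_mulVec, hU,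
        Matrix.one_mulVec]
    simpa only [dotProduct, ← sq] using this
  rw [e2]
  refine ⟨Finset.sum_nonneg fun i _ => by have := hl i; positivity, ?_⟩
  rw [← e3, Finset.mul_sum]
  refine Finset.sum_le_sum fun i _ => mul_le_mul_of_nonneg_right ?_ (sq_nonneg _)
  rw [div_le_iff₀ (hl i), hdl]
  simpa using prod_le_pow l hl hl2 {i}

theorem adj_bounds {n : ℕ} {A : Matrix (Fin n) (Fin n) ℝ} (hA : A.PosSemidef) (htr : A.trace ≤ 1) (p : Fin n → ℝ) :
    0 ≤ p ⬝ᵥ (A.adjugate *ᵥ p) ∧ p ⬝ᵥ (A.adjugate *ᵥ p) ≤ 2 ^ n * ∑ i, p i ^ 2 := by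
  have hc : Continuous (fun A : Matrix (Fin n) (Fin n) ℝ => p ⬝ᵥ (A.adjugate *ᵥ p)) :=
    Continuous.dotProduct continuous_const (Continuous.matrix_mulVec (Continuous.matrix_adjugate continuous_id) continuous_const)
  have hlim := (hc.tendsto A).comp (tendsto_add_smul A)
  have hev : ∀ᶠ t : ℝ in nhdsWithin 0 (Set.Ioi 0), t * n < 1 := by
    have : Filter.Tendsto (fun t : ℝ => t * n) (nhdsWithin 0 (Set.Ioi 0)) (nhds 0) := by
      have h : Continuous (fun t : ℝ => t * n) := by fun_prop
      have h2 := h.tendsto 0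
      simp only [zero_mul] at h2
      exact h2.mono_left nhdsWithin_le_nhds
    exact this.eventually (gt_mem_nhds one_pos)
  have hall : ∀ᶠ t : ℝ in nhdsWithin 0 (Set.Ioi 0), (A + t • (1 : Matrix (Fin n) (Fin n) ℝ)).PosDef ∧
      (A + t • (1 : Matrix (Fin n) (Fin n) ℝ)).trace ≤ 2 := by
    filter_upwards [self_mem_nhdsWithin, hev] with t ht htn
    refine ⟨posDef_add_smul hA ht, ?_⟩
    rw [Matrix.trace_add, Matrix.trace_smul, Matrix.trace_one]
    simp
    linarith
  constructor
  · exact ge_of_tendsto hlim (hall.mono fun t ht => (adj_bounds_pd ht.1 ht.2 p).1)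
  · exact le_of_tendsto hlim (hall.mono fun t ht => (adj_bounds_pd ht.1 ht.2 p).2)

theorem Ell_aco {n : ℕ} {b : ℝ} (hb : 0 ≤ b) {u : EuclideanSpace ℝ (Fin n) → ℝ} (hu : ContDiff ℝ ∞ u)
    (hps : ∀ x, (Mh u x).PosSemidef) (heq : ∀ x, (Mh u x).trace + b * (Mh u x).det = 1) :
    Ell (1 + b * 2 ^ n) (aco b u) := by
  have htr : ∀ x, (Mh u x).trace ≤ 1 := fun x => by
    have := mul_nonneg hb (hps x).det_nonneg
    linarith [heq x]
  have hBf : ∀ x p, Bf (aco b u x) p p = ∑ i, p i ^ 2 + b * (p ⬝ᵥ ((Mh u x).adjugate *ᵥ p)) := fun x p => by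
    rw [Bf_eq, aco, Matrix.add_mulVec, dotProduct_add, Matrix.one_mulVec, Matrix.smul_mulVec, dotProduct_smul, smul_eq_mul]
    simp only [dotProduct, sq]
  refine ⟨MS_aco b hu, fun x i j => congrFun (congrFun (aco_symm b hu x) j) i, fun x j => ?_, fun x p => ?_, fun x p => ?_⟩
  · have : ∀ i, pd i (fun y => aco b u y i j) x = b * Dj n (Mh u x) (mpd i (Mh u) x) i j := fun i =>
      congrFun (congrFun (mpd_aco b hu i x) i) j
    simp only [this, ← Finset.mul_sum]
    rw [piola_alg n _ (hps x) _ (fun i p q => T_symm1 hu x i p q) (fun i p q => T_symm2 hu x i p q) j, mul_zero]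
  · rw [hBf]
    have := mul_nonneg hb (adj_bounds (hps x) (htr x) p).1
    linarith
  · rw [hBf]
    have := mul_le_mul_of_nonneg_left (adj_bounds (hps x) (htr x) p).2 hb
    linarith

theorem Hess_entry {n : ℕ} {u : EuclideanSpace ℝ (Fin n) → ℝ} (hu : ContDiff ℝ ∞ u) (x : EuclideanSpace ℝ (Fin n)) (i j : Fin n) :
    iteratedFDeriv ℝ 2 u x ![EuclideanSpace.single i 1, EuclideanSpace.single j 1] = Mh u x i j := by
  rw [iteratedFDeriv_two_apply]
  have hd : DifferentiableAt ℝ (fderiv ℝ u) x :=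
    (hu.fderiv_right (m := ∞) (by simp)).differentiable (by simp) x
  change _ = fderiv ℝ (fun y => fderiv ℝ u y (EuclideanSpace.single j 1)) x (EuclideanSpace.single i 1)
  rw [fderiv_clm_apply hd (by fun_prop)]
  simp

theorem Mh_psd {n : ℕ} {u : EuclideanSpace ℝ (Fin n) → ℝ} (hu : ContDiff ℝ ∞ u) (hc : ConvexOn ℝ Set.univ u)
    (x : EuclideanSpace ℝ (Fin n)) : (Mh u x).PosSemidef := by
  have hsy := Mh_symm hu x
  refine Matrix.PosSemidef.of_dotProduct_mulVec_nonneg (by rw [Matrix.IsHermitian, Matrix.conjTranspose_eq_transpose_of_trivial, hsy]) fun p => ?_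
  set v : EuclideanSpace ℝ (Fin n) := WithLp.toLp 2 p with hv
  have hvs : v = ∑ i, p i • EuclideanSpace.single i (1:ℝ) := by
    ext j; simp [hv, Finset.sum_apply, Pi.single_apply]
  have hdu := cd_diff hu
  have hd : Differentiable ℝ (fderiv ℝ u) := 
    (hu.fderiv_right (m := ∞) (by simp)).differentiable (by simp)
  have hline : ∀ t : ℝ, HasDerivAt (fun t : ℝ => x + t • v) v t := fun t => by
    simpa using ((hasDerivAt_id t).smul_const v).const_add x
  set g : ℝ → ℝ := fun t => u (x + t • v) with hg
  have hg1 : ∀ t, HasDerivAt g (fderiv ℝ u (x + t • v) v) t := fun t =>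
    (hdu _).hasFDerivAt.comp_hasDerivAt t (hline t)
  have hgc : ConvexOn ℝ Set.univ g := by
    have := hc.comp_affineMap (AffineMap.lineMap x (x + v) : ℝ →ᵃ[ℝ] EuclideanSpace ℝ (Fin n))
    refine (this.congr fun t _ => ?_).subset (by simp) convex_univ
    simp [hg, AffineMap.lineMap_apply, add_comm]
  have hmono : Monotone (fun t : ℝ => fderiv ℝ u (x + t • v) v) := by
    have h1 := hgc.monotoneOn_deriv (fun t _ => (hg1 t).differentiableAt)
    have h2 : deriv g = fun t : ℝ => fderiv ℝ u (x + t • v) v := funext fun t => (hg1 t).deriv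
    rw [h2] at h1
    exact monotoneOn_univ.1 h1
  have hg2 : HasDerivAt (fun t : ℝ => fderiv ℝ u (x + t • v) v) (fderiv ℝ (fderiv ℝ u) x v v) 0 := by
    have h0 : x + (0:ℝ) • v = x := by simp
    have h1 : HasFDerivAt (fderiv ℝ u) (fderiv ℝ (fderiv ℝ u) x) (x + (0:ℝ) • v) := by
      rw [h0]; exact (hd x).hasFDerivAt
    have h2 := h1.comp_hasDerivAt (0:ℝ) (hline 0)
    have := h2.clm_apply (hasDerivAt_const (0:ℝ) v)
    simpa using this
  have hnn : 0 ≤ fderiv ℝ (fderiv ℝ u) x v v := by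
    rw [← hg2.deriv]; exact hmono.deriv_nonneg
  refine hnn.trans (le_of_eq ?_)
  have hM : ∀ i j, Mh u x i j = fderiv ℝ (fderiv ℝ u) x (EuclideanSpace.single i 1) (EuclideanSpace.single j 1) := fun i j => by
    rw [← Hess_entry hu, iteratedFDeriv_two_apply]; simp
  conv_lhs => rw [hvs]
  simp only [map_sum, ContinuousLinearMap.sum_apply, map_smul, ContinuousLinearMap.smul_apply, smul_eq_mul, dotProduct,
    Matrix.mulVec, hM, Pi.star_apply, star_trivial, Finset.mul_sum]
  rw [Finset.sum_comm]
  refine Finset.sum_congr rfl fun i _ => Finset.sum_congr rfl fun j _ => ?_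
  ring

end PartP5b

section PartP6

open scoped ContDiff Matrix
open MeasureTheory

theorem contDiff_scale {n : ℕ} {f : EuclideanSpace ℝ (Fin n) → ℝ} (hf : ContDiff ℝ ∞ f)
    (x0 : EuclideanSpace ℝ (Fin n)) (R : ℝ) : ContDiff ℝ ∞ (fun x => f (x0 + R • x)) :=
  hf.comp (contDiff_const.add (contDiff_id.const_smul R))

theorem pd_scale {n : ℕ} (i : Fin n) {f : EuclideanSpace ℝ (Fin n) → ℝ} (hf : ContDiff ℝ ∞ f)
    (x0 : EuclideanSpace ℝ (Fin n)) (R : ℝ) :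
    pd i (fun x => f (x0 + R • x)) = fun x => R * pd i f (x0 + R • x) := by
  funext x
  have h1 : HasFDerivAt (fun x : EuclideanSpace ℝ (Fin n) => x0 + R • x)
      (R • ContinuousLinearMap.id ℝ (EuclideanSpace ℝ (Fin n))) x :=
    ((hasFDerivAt_id x).const_smul R).const_add x0
  have := ((cd_diff hf (x0 + R • x)).hasFDerivAt.comp x h1).fderiv
  unfold pd
  change (fderiv ℝ (f ∘ fun x => x0 + R • x) x) _ = _
  rw [this]; simp

theorem pd_cmul {n : ℕ} (i : Fin n) {f : EuclideanSpace ℝ (Fin n) → ℝ} (hf : ContDiff ℝ ∞ f) (c : ℝ) :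
    pd i (fun x => c * f x) = fun x => c * pd i f x := by
  funext x
  rw [pd_mul i contDiff_const hf, pd_const]; ring

theorem Ell_scale {n : ℕ} {Λ : ℝ} {a : EuclideanSpace ℝ (Fin n) → Matrix (Fin n) (Fin n) ℝ} (ha : Ell Λ a)
    (x0 : EuclideanSpace ℝ (Fin n)) (R : ℝ) : Ell Λ (fun x => a (x0 + R • x)) := by
  refine ⟨fun i j => contDiff_scale (ha.smooth i j) x0 R, fun x => ha.symm _, fun x j => ?_, fun x => ha.lower _,
    fun x => ha.upper _⟩
  have : ∀ i, pd i (fun y => a (x0 + R • y) i j) x = R * pd i (fun y => a y i j) (x0 + R • x) := fun i =>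
    congrFun (pd_scale i (ha.smooth i j) x0 R) x
  simp only [this, ← Finset.mul_sum, ha.divfree, mul_zero]

theorem Lop_scale {n : ℕ} (a : EuclideanSpace ℝ (Fin n) → Matrix (Fin n) (Fin n) ℝ)
    {f : EuclideanSpace ℝ (Fin n) → ℝ} (hf : ContDiff ℝ ∞ f)
    (x0 : EuclideanSpace ℝ (Fin n)) (R c : ℝ) (x) :
    Lop (fun x => a (x0 + R • x)) (fun x => c * f (x0 + R • x)) x = c * R ^ 2 * Lop a f (x0 + R • x) := by
  unfold Lop
  rw [Finset.mul_sum]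
  refine Finset.sum_congr rfl fun i _ => ?_
  rw [Finset.mul_sum]
  refine Finset.sum_congr rfl fun j _ => ?_
  rw [pd_cmul j (contDiff_scale hf x0 R), pd_scale j hf,
    show (fun x => c * (R * pd j f (x0 + R • x))) = fun x => (c * R) * pd j f (x0 + R • x) from by funext x; ring,
    pd_cmul i (contDiff_scale (contDiff_pd j hf) x0 R), pd_scale i (contDiff_pd j hf)]
  ring

theorem harnack_scaled (n : ℕ) (hn : 2 ≤ n) (Λ : ℝ) (hΛ : 0 ≤ Λ) (θ : ℝ) (hθ : 0 < θ) : ∃ c, 0 < c ∧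
    ∀ a, Ell (n:=n) Λ a → ∀ v, ContDiff ℝ ∞ v → (∀ x, 0 ≤ v x) → (∀ x, Lop a v x ≤ 0) →
    ∀ x0 : EuclideanSpace ℝ (Fin n), ∀ R ε : ℝ, 0 < R → 0 < ε →
      ENNReal.ofReal (θ * R ^ n) ≤ volume ({x | ε ≤ v x} ∩ Metric.closedBall x0 R) → c * ε ≤ v x0 := by
  obtain ⟨c, hc, h⟩ := harnack n hn Λ hΛ θ hθ
  refine ⟨c, hc, fun a ha v hv hv0 hL x0 R ε hR hε hvol => ?_⟩
  have := h _ (Ell_scale ha x0 R) (fun x => ε⁻¹ * v (x0 + R • x)) (contDiff_const.mul (contDiff_scale hv x0 R))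
    (fun x => by have := hv0 (x0 + R • x); positivity)
    (fun x => by
      rw [Lop_scale a hv]
      exact mul_nonpos_of_nonneg_of_nonpos (by positivity) (hL _)) ?_
  · simp only [smul_zero, add_zero] at this
    rw [inv_mul_eq_div, le_div_iff₀ hε] at this
    exact this
  · have hset : ({x | 1 ≤ ε⁻¹ * v (x0 + R • x)} ∩ Bs n (1 ^ 2)) =
        (R • ·) ⁻¹' ((x0 + ·) ⁻¹' ({x | ε ≤ v x} ∩ Metric.closedBall x0 R)) := by
      ext x
      simp only [Set.mem_inter_iff, Set.mem_preimage, Set.mem_setOf_eq, Metric.mem_closedBall, mem_Bs_iff (zero_le_one)]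
      refine and_congr ?_ ?_
      · rw [inv_mul_eq_div, le_div_iff₀ hε, one_mul]
      · rw [dist_eq_norm, add_sub_cancel_left, norm_smul, Real.norm_eq_abs, abs_of_pos hR]
        constructor
        · intro hx; nlinarith
        · intro hx; by_contra hc; push Not at hc; nlinarith
    rw [hset, Measure.addHaar_preimage_smul volume hR.ne', measure_preimage_add, finrank_euclideanSpace, Fintype.card_fin,
      abs_of_pos (by positivity)]
    calc ENNReal.ofReal θ = ENNReal.ofReal (R ^ n)⁻¹ * ENNReal.ofReal (θ * R ^ n) := by
          rw [← ENNReal.ofReal_mul (by positivity)]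
          congr 1; field_simp
      _ ≤ _ := by gcongr

theorem sup_arg (n : ℕ) (hn : 2 ≤ n) (Λ : ℝ) (hΛ : 0 ≤ Λ) {a : EuclideanSpace ℝ (Fin n) → Matrix (Fin n) (Fin n) ℝ}
    (ha : Ell Λ a) {ι : Type*} (s : Finset ι) (f : ι → EuclideanSpace ℝ (Fin n) → ℝ)
    (hf : ∀ i, ContDiff ℝ ∞ (f i)) (hf0 : ∀ i x, 0 ≤ f i x) (hL : ∀ i x, Lop a (f i) x ≤ 0)
    (hinf : ∀ i ε, 0 < ε → ∃ x, f i x < ε) (ε : ι → ℝ) (hε : ∀ i, 0 < ε i) : ∃ x, ∀ i ∈ s, f i x < ε i := by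
  by_contra hcon
  push Not at hcon
  have hsne : s.Nonempty := by
    obtain ⟨i, hi, _⟩ := hcon 0
    exact ⟨i, hi⟩
  have hcard : 0 < (s.card : ℝ) := by exact_mod_cast hsne.card_pos
  set V := (volume (Metric.closedBall (0 : EuclideanSpace ℝ (Fin n)) 1)).toReal with hV
  have hVfin : volume (Metric.closedBall (0 : EuclideanSpace ℝ (Fin n)) 1) ≠ ⊤ :=
    (isCompact_closedBall _ _).measure_lt_top.ne
  have hVpos : 0 < V := ENNReal.toReal_pos (Metric.measure_closedBall_pos volume _ one_pos).ne' hVfin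
  obtain ⟨c, hc, hH⟩ := harnack_scaled n hn Λ hΛ (V / (s.card * 2 ^ n)) (by positivity)
  choose xs hxs using fun i => hinf i (c * ε i) (mul_pos hc (hε i))
  obtain ⟨R, hR1, hR⟩ : ∃ R : ℝ, 1 ≤ R ∧ ∀ i ∈ s, ‖xs i‖ ≤ R := by
    refine ⟨1 + ∑ i ∈ s, ‖xs i‖, by have := Finset.sum_nonneg (s := s) (fun i _ => norm_nonneg (xs i)); linarith, fun i hi => ?_⟩
    have := Finset.single_le_sum (s := s) (f := fun i => ‖xs i‖) (fun i _ => norm_nonneg (xs i)) hi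
    linarith
  have hR0 : 0 < R := by linarith
  set m : ι → ENNReal := fun i => volume ({x | ε i ≤ f i x} ∩ Metric.closedBall 0 R) with hm
  obtain ⟨i, hi, hmax⟩ := Finset.exists_max_image s m hsne
  have hle : volume (Metric.closedBall (0 : EuclideanSpace ℝ (Fin n)) R) ≤ s.card * m i := by
    calc _ ≤ volume (⋃ i ∈ s, ({x | ε i ≤ f i x} ∩ Metric.closedBall 0 R)) := by
          refine measure_mono fun x hx => ?_
          obtain ⟨j, hj, hjx⟩ := hcon x
          exact Set.mem_biUnion (show j ∈ (s : Set ι) from hj) ⟨hjx, hx⟩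
      _ ≤ ∑ i ∈ s, m i := measure_biUnion_finset_le s _
      _ ≤ s.card • m i := Finset.sum_le_card_nsmul _ _ _ hmax
      _ = _ := nsmul_eq_mul _ _
  rw [Measure.addHaar_closedBall' volume _ hR0.le, finrank_euclideanSpace, Fintype.card_fin, ← ENNReal.ofReal_toReal hVfin, ← hV,
    ← ENNReal.ofReal_mul (by positivity)] at hle
  have hmi : ENNReal.ofReal (V / (s.card * 2 ^ n) * (2 * R) ^ n) ≤ m i := by
    have e : V / (s.card * 2 ^ n) * (2 * R) ^ n = (s.card : ℝ)⁻¹ * (R ^ n * V) := by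
      rw [mul_pow]; field_simp
    rw [e, ENNReal.ofReal_mul (by positivity), ENNReal.ofReal_inv_of_pos hcard, ENNReal.ofReal_natCast]
    rw [← ENNReal.div_eq_inv_mul]
    exact ENNReal.div_le_of_le_mul' hle
  have := hH a ha (f i) (hf i) (hf0 i) (hL i) (xs i) (2 * R) (ε i) (by positivity) (hε i) (hmi.trans ?_)
  · exact absurd (hxs i) (not_lt.2 this)
  · refine measure_mono (Set.inter_subset_inter_right _ fun x hx => ?_)
    rw [mem_closedBall_zero_iff] at hx
    rw [Metric.mem_closedBall, dist_eq_norm]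
    have := norm_sub_le x (xs i)
    linarith [hR i hi]

end PartP6

section PartP7

open scoped ContDiff Matrix
open MeasureTheory

/-- the compact set of admissible Hessians -/
def Kset (n : ℕ) (b : ℝ) : Set (Matrix (Fin n) (Fin n) ℝ) :=
  {A | A.PosSemidef ∧ A.trace + b * A.det = 1}

theorem quad_continuous {n : ℕ} (p : Fin n → ℝ) : Continuous (fun A : Matrix (Fin n) (Fin n) ℝ => p ⬝ᵥ (A *ᵥ p)) :=
  Continuous.dotProduct continuous_const (Continuous.matrix_mulVec continuous_id continuous_const)

theorem psd_iff {n : ℕ} (A : Matrix (Fin n) (Fin n) ℝ) : A.PosSemidef ↔ Aᵀ = A ∧ ∀ p : Fin n → ℝ, 0 ≤ p ⬝ᵥ (A *ᵥ p) := by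
  constructor
  · intro h
    refine ⟨?_, fun p => by simpa using h.dotProduct_mulVec_nonneg p⟩
    have := h.1
    rwa [Matrix.IsHermitian, Matrix.conjTranspose_eq_transpose_of_trivial] at this
  · rintro ⟨h1, h2⟩
    refine Matrix.PosSemidef.of_dotProduct_mulVec_nonneg ?_ fun p => by simpa using h2 p
    rwa [Matrix.IsHermitian, Matrix.conjTranspose_eq_transpose_of_trivial]

theorem Kset_trace {n : ℕ} {b : ℝ} (hb : 0 ≤ b) {A : Matrix (Fin n) (Fin n) ℝ} (hA : A ∈ Kset n b) : A.trace ≤ 1 := by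
  have := mul_nonneg hb hA.1.det_nonneg
  linarith [hA.2]

theorem Kset_isClosed (n : ℕ) (b : ℝ) : IsClosed (Kset n b) := by
  have : Kset n b = {A | Aᵀ = A} ∩ (⋂ p : Fin n → ℝ, {A | 0 ≤ p ⬝ᵥ (A *ᵥ p)}) ∩ {A | A.trace + b * A.det = 1} := by
    ext A
    simp only [Kset, Set.mem_setOf_eq, psd_iff, Set.mem_inter_iff, Set.mem_iInter]
  rw [this]
  refine (IsClosed.inter ?_ (isClosed_iInter fun p => ?_)).inter ?_
  · exact isClosed_eq (continuous_id.matrix_transpose) continuous_id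
  · exact isClosed_le continuous_const (quad_continuous p)
  · exact isClosed_eq (continuous_id.matrix_trace.add (continuous_const.mul continuous_id.matrix_det)) continuous_const

theorem Kset_isCompact (n : ℕ) {b : ℝ} (hb : 0 ≤ b) : IsCompact (Kset n b) := by
  have hc : IsCompact (Set.pi Set.univ fun _ : Fin n => Set.pi Set.univ fun _ : Fin n => Set.Icc (-1:ℝ) 1) :=
    isCompact_univ_pi fun _ => isCompact_univ_pi fun _ => isCompact_Icc
  refine IsCompact.of_isClosed_subset hc (Kset_isClosed n b) fun A hA => ?_
  have htr := Kset_trace hb hA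
  obtain ⟨hs, hq⟩ := (psd_iff A).1 hA.1
  have hdiag : ∀ i, 0 ≤ A i i := fun i => by simpa using hq (Pi.single i 1)
  have hd1 : ∀ i, A i i ≤ 1 := fun i =>
    (Finset.single_le_sum (f := fun i => A i i) (fun j _ => hdiag j) (Finset.mem_univ i)).trans htr
  intro i _ j _
  have hsij : A j i = A i j := congrFun (congrFun hs i) j
  have h1 := hq (Pi.single i 1 + Pi.single j 1)
  have h2 := hq (Pi.single i 1 - Pi.single j 1)
  simp [Matrix.mulVec_add, Matrix.mulVec_sub] at h1 h2
  have := hd1 i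
  have := hd1 j
  constructor <;> linarith

theorem res_continuousAt {n : ℕ} {δ : ℝ} (hδ : 0 < δ) {A : Matrix (Fin n) (Fin n) ℝ} (hA : A.PosSemidef) (e : Fin n → ℝ) :
    ContinuousAt (fun A : Matrix (Fin n) (Fin n) ℝ => e ⬝ᵥ ((A + δ • (1 : Matrix (Fin n) (Fin n) ℝ))⁻¹ *ᵥ e)) A := by
  have hi : ContinuousAt (fun A : Matrix (Fin n) (Fin n) ℝ => (A + δ • (1 : Matrix (Fin n) (Fin n) ℝ))⁻¹) A := by
    simp_rw [Matrix.inv_def, Ring.inverse_eq_inv']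
    have hadd : Continuous (fun A : Matrix (Fin n) (Fin n) ℝ => A + δ • (1 : Matrix (Fin n) (Fin n) ℝ)) := by
      fun_prop
    exact (hadd.matrix_det.continuousAt.inv₀ (posDef_add_smul hA hδ).det_pos.ne').smul
      hadd.matrix_adjugate.continuousAt
  exact ContinuousAt.comp (g := fun B : Matrix (Fin n) (Fin n) ℝ => e ⬝ᵥ (B *ᵥ e)) (quad_continuous e).continuousAt hi

theorem inv_order {n : ℕ} {Q P : Matrix (Fin n) (Fin n) ℝ} (hQ : Q.PosDef) (hP : P.PosDef)
    (h : ∀ e : Fin n → ℝ, e ⬝ᵥ (P⁻¹ *ᵥ e) ≤ e ⬝ᵥ (Q⁻¹ *ᵥ e)) (y : Fin n → ℝ) : y ⬝ᵥ (Q *ᵥ y) ≤ y ⬝ᵥ (P *ᵥ y) := by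
  have hQu : IsUnit Q.det := hQ.det_pos.ne'.isUnit
  have hPu : IsUnit P.det := hP.det_pos.ne'.isUnit
  have hPs := ((psd_iff P).1 hP.posSemidef).1
  set z := Q *ᵥ y with hz
  have h1 : z ⬝ᵥ (Q⁻¹ *ᵥ z) = y ⬝ᵥ z := by
    conv_lhs => rw [hz, Matrix.mulVec_mulVec, Matrix.nonsing_inv_mul _ hQu, Matrix.one_mulVec, ← hz, dotProduct_comm]
  set r := P⁻¹ *ᵥ z with hr
  have hPr : P *ᵥ r = z := by rw [hr, Matrix.mulVec_mulVec, Matrix.mul_nonsing_inv _ hPu, Matrix.one_mulVec]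
  have h2 := ((psd_iff P).1 hP.posSemidef).2 (y - r)
  rw [Matrix.mulVec_sub, hPr, sub_dotProduct, dotProduct_sub, dotProduct_sub] at h2
  have h3 : r ⬝ᵥ (P *ᵥ y) = y ⬝ᵥ z := by
    rw [Matrix.dotProduct_mulVec, ← Matrix.mulVec_transpose, hPs, hPr, dotProduct_comm]
  have h4 := h z
  rw [h1, ← hr, dotProduct_comm z r] at h4
  linarith

theorem trace_mul_nonneg {n : ℕ} {A X : Matrix (Fin n) (Fin n) ℝ} (hA : ∀ p : Fin n → ℝ, 0 ≤ p ⬝ᵥ (A *ᵥ p)) (hX : X.PosSemidef) :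
    0 ≤ (A * X).trace := by
  obtain ⟨U, l, hU, hU', hl0, hXe⟩ := spec_psd hX
  rw [Matrix.trace_mul_comm, hXe, conj_tr1]
  refine Finset.sum_nonneg fun i _ => mul_nonneg (hl0 i) ?_
  have := hA (fun k => U k i)
  refine this.trans (le_of_eq ?_)
  rw [Matrix.mul_assoc]
  simp only [Matrix.mul_apply, dotProduct, Matrix.mulVec, Matrix.transpose_apply]

theorem det_mono_psd {n : ℕ} {P Q : Matrix (Fin n) (Fin n) ℝ} (hP : P.PosSemidef) (hQ : Q.PosSemidef) (htP : P.trace ≤ 1)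
    (htQ : Q.trace ≤ 1) (h : (P - Q).PosSemidef) : Q.det ≤ P.det := by
  set X : Fin n → Fin n → ℝ := fun i j => (P - Q) i j with hX
  set q : Fin n → Fin n → ℝ := fun i j => Q i j with hq
  set g : ℝ → ℝ := fun t => dt n (q + t • X) with hg
  have hd : ∀ t, HasDerivAt g (fderiv ℝ (dt n) (q + t • X) X) t := fun t => by
    have h1 : HasDerivAt (fun t : ℝ => q + t • X) X t := by
      simpa using ((hasDerivAt_id t).smul_const X).const_add q
    exact ((contDiff_dt n).differentiable (by simp) _).hasFDerivAt.comp_hasDerivAt t h1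
  have hmono : MonotoneOn g (Set.Icc 0 1) := by
    refine monotoneOn_of_deriv_nonneg (convex_Icc 0 1) (fun t _ => (hd t).continuousAt.continuousWithinAt)
      (fun t _ => (hd t).differentiableAt.differentiableWithinAt) fun t ht => ?_
    rw [interior_Icc] at ht
    rw [(hd t).deriv, fderiv_dt]
    have e : (Matrix.of (q + t • X)) = (1 - t) • Q + t • P := by
      ext i j
      simp [hq, hX]; ring
    have hps : ((1 - t) • Q + t • P).PosSemidef :=
      (hQ.smul (by linarith [ht.2])).add (hP.smul ht.1.le)
    have htr : ((1 - t) • Q + t • P).trace ≤ 1 := by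
      simp only [Matrix.trace_add, Matrix.trace_smul, smul_eq_mul]
      nlinarith [ht.1, ht.2]
    have := trace_mul_nonneg (fun p => (adj_bounds hps htr p).1) h
    rw [e]
    refine this.trans (le_of_eq ?_)
    simp only [Matrix.trace, Matrix.diag, Matrix.mul_apply]
    rw [Finset.sum_comm]
  have h01 := hmono (Set.left_mem_Icc.2 zero_le_one) (Set.right_mem_Icc.2 zero_le_one) zero_le_one
  have e0 : g 0 = Q.det := by
    simp only [hg, zero_smul, add_zero]; rfl
  have e1 : g 1 = P.det := by
    have : (Matrix.of (q + (1:ℝ) • X)) = P := by ext i j; simp [hq, hX]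
    simp only [hg, dt]; rw [this]
  rw [e0, e1] at h01
  exact h01

theorem Kset_rigid {n : ℕ} {b δ : ℝ} (hb : 0 ≤ b) (hδ : 0 < δ) {m P : Matrix (Fin n) (Fin n) ℝ} (hm : m ∈ Kset n b)
    (hP : P ∈ Kset n b) (h : ∀ e : Fin n → ℝ, e ⬝ᵥ ((P + δ • (1 : Matrix (Fin n) (Fin n) ℝ))⁻¹ *ᵥ e) ≤
      e ⬝ᵥ ((m + δ • (1 : Matrix (Fin n) (Fin n) ℝ))⁻¹ *ᵥ e)) : P = m := by
  have h1 := inv_order (posDef_add_smul hm.1 hδ) (posDef_add_smul hP.1 hδ) h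
  have h2 : (P - m).PosSemidef := by
    rw [psd_iff]
    refine ⟨by rw [Matrix.transpose_sub, ((psd_iff P).1 hP.1).1, ((psd_iff m).1 hm.1).1], fun p => ?_⟩
    have := h1 p
    rw [Matrix.add_mulVec, Matrix.add_mulVec, dotProduct_add, dotProduct_add] at this
    rw [Matrix.sub_mulVec, dotProduct_sub]
    linarith
  have h3 := mul_le_mul_of_nonneg_left (det_mono_psd hP.1 hm.1 (Kset_trace hb hP) (Kset_trace hb hm) h2) hb
  have h4 : (P - m).trace = 0 := by
    refine le_antisymm ?_ h2.trace_nonneg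
    rw [Matrix.trace_sub]
    linarith [hP.2, hm.2]
  exact sub_eq_zero.1 (h2.trace_eq_zero_iff.1 h4)

theorem main_rigid {n : ℕ} (hn : 2 ≤ n) {b : ℝ} (hb : 0 ≤ b) {u : EuclideanSpace ℝ (Fin n) → ℝ} (hu : ContDiff ℝ ∞ u)
    (hps : ∀ x, (Mh u x).PosSemidef) (heq : ∀ x, (Mh u x).trace + b * (Mh u x).det = 1) (x y) : Mh u x = Mh u y := by
  obtain ⟨δ, hδ, hL⟩ := Lop_wq_nonneg (n := n) hb
  have hL := hL hu hps heq
  have hEll := Ell_aco hb hu hps heq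
  have hK : ∀ x, Mh u x ∈ Kset n b := fun x => ⟨hps x, heq x⟩
  set F : (Fin n → ℝ) → Matrix (Fin n) (Fin n) ℝ → ℝ := fun e A => e ⬝ᵥ ((A + δ • (1 : Matrix (Fin n) (Fin n) ℝ))⁻¹ *ᵥ e) with hF
  have hFc : ∀ e, ContinuousOn (F e) (Kset n b) := fun e A hA => (res_continuousAt hδ hA.1 e).continuousWithinAt
  have hFw : ∀ e x, F e (Mh u x) = wq δ u e x := fun e x => rfl
  have hbdd : ∀ e, BddAbove (Set.range (wq δ u e)) := fun e => by
    refine ((Kset_isCompact n hb).bddAbove_image (hFc e)).mono ?_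
    rintro _ ⟨x, rfl⟩
    exact ⟨_, hK x, rfl⟩
  set S : (Fin n → ℝ) → ℝ := fun e => ⨆ x, wq δ u e x with hS
  have hwS : ∀ e x, wq δ u e x ≤ S e := fun e x => le_ciSup (hbdd e) x
  have hwc : ∀ e, ContDiff ℝ ∞ (wq δ u e) := fun e => contDiff_quad (MS_Nr hδ hu hps) e
  set t : (Fin n → ℝ) × ℕ → Set (Matrix (Fin n) (Fin n) ℝ) := fun i =>
    Kset n b ∩ F i.1 ⁻¹' (Set.Ici (S i.1 - 1 / ((i.2:ℝ) + 1))) with ht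
  have hne : (Kset n b ∩ ⋂ i, t i).Nonempty := by
    refine (Kset_isCompact n hb).inter_iInter_nonempty t (fun i => ?_) fun s => ?_
    · exact (hFc i.1).preimage_isClosed_of_isClosed (Kset_isClosed n b) isClosed_Ici
    · obtain ⟨z, hz⟩ := sup_arg n hn (1 + b * 2 ^ n) (by positivity) hEll s (fun i x => S i.1 - wq δ u i.1 x)
        (fun i => contDiff_const.sub (hwc i.1)) (fun i x => sub_nonneg.2 (hwS i.1 x))
        (fun i x => by
          have h1 : ∀ j, pd j (fun x => S i.1 - wq δ u i.1 x) = fun x => - pd j (wq δ u i.1) x := fun j => by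
            funext x
            have : (fun x => S i.1 - wq δ u i.1 x) = fun x => S i.1 + (fun x => - wq δ u i.1 x) x := by
              funext x; ring
            rw [this, pd_add j contDiff_const (hwc i.1).neg, pd_const, pd_neg, zero_add]
          have h2 : ∀ k j, pd k (pd j (fun x => S i.1 - wq δ u i.1 x)) x = - pd k (pd j (wq δ u i.1)) x := fun k j => by
            rw [h1, pd_neg]
          have := hL i.1 x
          unfold Lop at this ⊢
          simp only [h2, mul_neg, Finset.sum_neg_distrib]
          linarith)
        (fun i ε hε => by
          obtain ⟨x, hx⟩ := exists_lt_of_lt_ciSup (show S i.1 - ε < ⨆ x, wq δ u i.1 x by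
            change S i.1 - ε < S i.1; linarith)
          exact ⟨x, by linarith⟩)
        (fun i => 1 / ((i.2:ℝ) + 1)) (fun i => by positivity)
      refine ⟨Mh u z, hK z, Set.mem_iInter₂.2 fun i hi => ⟨hK z, ?_⟩⟩
      have := hz i hi
      change S i.1 - 1 / ((i.2:ℝ) + 1) ≤ wq δ u i.1 z
      linarith
  obtain ⟨m, hmK, hm⟩ := hne
  have hmS : ∀ e, S e ≤ F e m := fun e => by
    have h1 : ∀ k : ℕ, S e ≤ F e m + 1 / ((k:ℝ) + 1) := fun k => by
      have := (Set.mem_iInter.1 hm (e, k)).2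
      change S e - 1 / ((k:ℝ) + 1) ≤ F e m at this
      linarith
    refine le_of_forall_pos_le_add fun ε hε => ?_
    obtain ⟨k, hk⟩ := exists_nat_one_div_lt hε
    linarith [h1 k]
  have hall : ∀ x, Mh u x = m := fun x => Kset_rigid hb hδ hmK (hK x) fun e => (hwS e x).trans (hmS e)
  rw [hall x, hall y]

theorem all_rigid {n : ℕ} {b : ℝ} (hb : 0 ≤ b) {u : EuclideanSpace ℝ (Fin n) → ℝ} (hu : ContDiff ℝ ∞ u)
    (hps : ∀ x, (Mh u x).PosSemidef) (heq : ∀ x, (Mh u x).trace + b * (Mh u x).det = 1) (x y) : Mh u x = Mh u y := by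
  rcases Nat.lt_or_ge n 2 with hn | hn
  · interval_cases n
    · ext i j; exact i.elim0
    · have h1 : ∀ x, (1 + b) * Mh u x 0 0 = 1 := fun x => by
        have := heq x
        simp [Matrix.trace_fin_one] at this
        linarith
      ext i j
      rw [Subsingleton.elim i 0, Subsingleton.elim j 0]
      exact mul_left_cancel₀ (show (1 + b) ≠ 0 by positivity) ((h1 x).trans (h1 y).symm)
  · exact main_rigid hn hb hu hps heq x y

end PartP7

/-- Lemma 5.6 (Liouville theorem): let `b ≥ 0` and suppose `u : ℝⁿ → ℝ` is a smooth convex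
function satisfying `Δu + b·det(D²u) = 1` on all of `ℝⁿ`. Then `u` is a quadratic polynomial;
equivalently, the Hessian `D²u` is a constant matrix. -/
theorem statement16 (n : ℕ) (b : ℝ) (hb : 0 ≤ b)
    (u : EuclideanSpace ℝ (Fin n) → ℝ)
    (hsmooth : ContDiff ℝ (⊤ : ℕ∞) u)
    (hconv : ConvexOn ℝ Set.univ u)
    (heq : ∀ x, (Hess n u x).trace + b * (Hess n u x).det = 1) :
    ∀ x y, Hess n u x = Hess n u y := by
  have hH : ∀ x, Hess n u x = Mh u x := fun x => by
    ext i j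
    exact Hess_entry hsmooth x i j
  intro x y
  rw [hH, hH]
  exact all_rigid hb hsmooth (fun x => Mh_psd hsmooth hconv x)
    (fun x => by rw [← hH]; exact heq x) x y
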